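/- arXiv:1712.09199 — 3 statements merged into one kernel-verified Lean document; each statement's English description precedes it below -/
import Mathlib

section
/- For every n ≥ 2 there exists a Borel set B ⊂ ℝⁿ with L^n(B) = 0 such that B contains a whole line in every direction, i.e. for every unit vector e ∈ S^{n-1} there exists b ∈ ℝⁿ with {b + t·e : t ∈ ℝ} ⊂ B. Moreover, there exists a compact set K ⊂ ℝⁿ with L^n(K) = 0 such that for every unit vector e ∈ S^{n-1} there exists b ∈ ℝⁿ with {b + t·e : t ∈ [0, 1]} ⊂ K. -/
open MeasureTheory Metric
open scoped ENNReal

/-!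
In the plane, take the lines `y = a x + g(a)` with
`a = 2 ∑ dᵢ 2^{-(i+1)} - 1` and `g(a) = -∑ cᵢ dᵢ 2^{-i}`, where `d` runs over the binary sequences,
so that `a` runs over `[-1, 1]`. Up to the translation by `-x`, the vertical section at `x` of the
union `S` of these lines is the set of all sums `∑ (x - cᵢ) dᵢ 2^{-i}`. The coefficients
`cᵢ = log i * sin (log i)` vary so slowly, while oscillating through all of `ℝ`, that for all `x` and
`ε > 0` there is `m` with `|x - c_{m+j}| ≤ ε (j + 1)` for every `j` (`exists_abs_sub_center_le`).
Fixing the first `m` digits therefore fixes the sum up to `4 ε 2^{-m}`, and the `2^m` choices of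
these digits cover the section by intervals of total length at most `8 ε`. Hence every vertical
section is null (`volume_section`), and `S` is null by Fubini. It is closed, being the projection of
a closed set along the compact space of digit sequences.

In `ℝⁿ`, a vector `e` satisfies `e 1 = a * e 0` or `e 0 = a * e 1` with `a ∈ [-1, 1]`, so the
union of the two preimages of `S` under `p ↦ (p 0, p 1)` and `p ↦ (p 1, p 0)` contains a line in
every direction. Since `g` is bounded, intersecting with a large closed ball gives the compact set.
-/

/-! ### The planar family of lines -/

/-- The slowly varying coefficients `cᵢ = log i * sin (log i)`. -/
noncomputable def center (i : ℕ) : ℝ := Real.log i * Real.sin (Real.log i)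

/-- The slope in `[-1, 1]` encoded by a binary digit sequence. -/
noncomputable def slope2 (d : ℕ → Fin 2) : ℝ := 2 * Real.ofDigits d - 1

/-- Minus the intercept of the line encoded by `d`. -/
noncomputable def shift (d : ℕ → Fin 2) : ℝ := ∑' i, center i * (d i : ℕ) * (1 / 2) ^ i

/-- The planar union of the lines `y = slope2 d * x - shift d`. -/
def lineSet : Set (ℝ × ℝ) := {p | ∃ d, p.2 = slope2 d * p.1 - shift d}

/-! ### Slow variation of the coefficients -/

theorem abs_mul_sin_sub_le (a b : ℝ) :
    |a * Real.sin a - b * Real.sin b| ≤ (1 + |b|) * |a - b| := by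
  have h : a * Real.sin a - b * Real.sin b
      = (a - b) * Real.sin a + b * (Real.sin a - Real.sin b) := by ring
  have h2 : |Real.sin a - Real.sin b| ≤ |a - b| := by
    simpa [Real.dist_eq] using Real.lipschitzWith_sin.dist_le_mul a b
  calc _ ≤ |a - b| * |Real.sin a| + |b| * |Real.sin a - Real.sin b| := by
        rw [h, ← abs_mul, ← abs_mul]; exact abs_add_le _ _
    _ ≤ |a - b| * 1 + |b| * |a - b| := by
        gcongr; exact Real.abs_sin_le_one a
    _ = _ := by ring

theorem exists_mul_sin_eq (x M : ℝ) : ∃ u ≥ M, u * Real.sin u = x := by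
  obtain ⟨k, hk⟩ := exists_nat_ge (|M| + |x| + 2)
  have hpi := Real.pi_gt_three
  have hM := le_abs_self M
  have hM0 := abs_nonneg M
  have hx0 := abs_nonneg x
  have hx := abs_le.1 (le_refl |x|)
  have hk2 : (k : ℝ) * 3 ≤ k * Real.pi := by gcongr
  have hpi4 := Real.pi_le_four
  have h1 : Real.sin (-(Real.pi / 2) + k * (2 * Real.pi)) = -1 := by
    rw [Real.sin_add_nat_mul_two_pi, Real.sin_neg, Real.sin_pi_div_two]
  have h2 : Real.sin (Real.pi / 2 + k * (2 * Real.pi)) = 1 := by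
    rw [Real.sin_add_nat_mul_two_pi, Real.sin_pi_div_two]
  have hc : ContinuousOn (fun u : ℝ => u * Real.sin u)
      (Set.Icc (-(Real.pi / 2) + k * (2 * Real.pi)) (Real.pi / 2 + k * (2 * Real.pi))) := by
    fun_prop
  obtain ⟨u, hu, hux⟩ := intermediate_value_Icc (by linarith) hc
    (show x ∈ Set.Icc _ _ by
      simp only [h1, h2]
      constructor <;> nlinarith)
  exact ⟨u, by nlinarith [hu.1], hux⟩

/-- After some index `m`, the coefficients drift away from the prescribed value `x` at most linearly,
with an arbitrarily small constant. -/
theorem exists_abs_sub_center_le (x : ℝ) {ε : ℝ} (hε : 0 < ε) :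
    ∃ m : ℕ, ∀ j : ℕ, |x - center (m + j)| ≤ ε * (j + 1) := by
  have hlim : Filter.Tendsto (fun u : ℝ => (1 + u) * Real.exp (-u)) Filter.atTop (nhds 0) := by
    have h1 := Real.tendsto_pow_mul_exp_neg_atTop_nhds_zero 1
    have h0 := Real.tendsto_pow_mul_exp_neg_atTop_nhds_zero 0
    simpa [add_mul] using h0.add h1
  obtain ⟨M, hM⟩ := Filter.eventually_atTop.1 (hlim.eventually (ge_mem_nhds hε))
  obtain ⟨u, hu, rfl⟩ := exists_mul_sin_eq x (max M 0)
  have hu0 : 0 ≤ u := le_trans (le_max_right _ _) hu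
  have hue := hM u (le_trans (le_max_left _ _) hu)
  -- With `m = ⌈exp u⌉`, `log (m + j)` exceeds `u` by at most `(j + 1) * exp (-u)`, while `t * sin t`
  -- has difference quotients from `u` at most `1 + u`.
  refine ⟨⌈Real.exp u⌉₊, fun j => ?_⟩
  have he := Real.exp_pos u
  have hm1 := Nat.le_ceil (Real.exp u)
  have hm2 := Nat.ceil_lt_add_one he.le
  set m := ⌈Real.exp u⌉₊
  have hj : (0 : ℝ) ≤ j := Nat.cast_nonneg j
  have hlog1 : 0 ≤ Real.log ((m + j : ℕ) : ℝ) - u := by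
    rw [sub_nonneg, Real.le_log_iff_exp_le (by push_cast; linarith)]
    push_cast; linarith
  have hlog2 : Real.log ((m + j : ℕ) : ℝ) - u ≤ Real.exp (-u) * (j + 1) := by
    have h := Real.log_le_sub_one_of_pos (x := ((m + j : ℕ) : ℝ) / Real.exp u)
      (div_pos (by push_cast; linarith) he)
    rw [Real.log_div (by push_cast; linarith) he.ne', Real.log_exp] at h
    refine h.trans ?_
    rw [Real.exp_neg, inv_mul_eq_div, div_sub_one he.ne']
    gcongr
    push_cast; linarith
  rw [abs_sub_comm]
  calc _ ≤ (1 + |u|) * |Real.log ((m + j : ℕ) : ℝ) - u| := abs_mul_sin_sub_le _ _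
    _ ≤ (1 + u) * (Real.exp (-u) * (j + 1)) := by
        rw [abs_of_nonneg hu0, abs_of_nonneg hlog1]; gcongr
    _ = ((1 + u) * Real.exp (-u)) * (j + 1) := by ring
    _ ≤ _ := by gcongr

/-! ### Binary series -/

theorem abs_center_le (i : ℕ) : |center i| ≤ i := by
  rw [center, abs_mul]
  have h1 : |Real.log i| ≤ i := by
    rw [abs_of_nonneg (Real.log_natCast_nonneg i)]
    exact Real.log_le_self (Nat.cast_nonneg i)
  calc _ ≤ (i : ℝ) * 1 := by gcongr; exact Real.abs_sin_le_one _
    _ = i := mul_one _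

theorem digit_le_one (d : Fin 2) : ((d : ℕ) : ℝ) ≤ 1 := by
  exact_mod_cast Nat.le_of_lt_succ d.2

theorem hasSum_nat_mul_half_pow : HasSum (fun i : ℕ => (i : ℝ) * (1 / 2) ^ i) 2 := by
  have h := hasSum_coe_mul_geometric_of_norm_lt_one (𝕜 := ℝ) (r := 1 / 2) (by norm_num)
  norm_num at h ⊢
  exact h

theorem norm_shift_term_le (d : ℕ → Fin 2) (i : ℕ) :
    ‖center i * (d i : ℕ) * (1 / 2) ^ i‖ ≤ (i : ℝ) * (1 / 2) ^ i := by
  rw [norm_mul, norm_mul, Real.norm_of_nonneg (Nat.cast_nonneg _), Real.norm_eq_abs,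
    Real.norm_of_nonneg (by positivity : (0 : ℝ) ≤ (1 / 2) ^ i)]
  gcongr
  calc _ ≤ (i : ℝ) * 1 := by
        gcongr
        · exact abs_center_le i
        · exact digit_le_one _
    _ = i := mul_one _

theorem hasSum_shift (d : ℕ → Fin 2) :
    HasSum (fun i => center i * (d i : ℕ) * (1 / 2) ^ i) (shift d) :=
  (Summable.of_norm_bounded hasSum_nat_mul_half_pow.summable (norm_shift_term_le d)).hasSum

theorem abs_shift_le (d : ℕ → Fin 2) : |shift d| ≤ 2 :=
  (hasSum_shift d).norm_le_of_bounded hasSum_nat_mul_half_pow (norm_shift_term_le d)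

theorem continuous_shift : Continuous shift := by
  refine continuous_tsum (fun i => ?_) hasSum_nat_mul_half_pow.summable
    (fun i d => norm_shift_term_le d i)
  have : Continuous fun d : ℕ → Fin 2 => ((d i : ℕ) : ℝ) :=
    (continuous_of_discreteTopology (f := fun k : Fin 2 => ((k : ℕ) : ℝ))).comp
      (continuous_apply i)
  fun_prop

theorem continuous_slope2 : Continuous slope2 := by
  have := Real.continuous_ofDigits (b := 2)
  unfold slope2
  fun_prop

theorem exists_slope2_eq {a : ℝ} (ha : |a| ≤ 1) : ∃ d, slope2 d = a := by
  obtain ⟨h1, h2⟩ := abs_le.1 ha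
  obtain ⟨d, -, hd⟩ := Real.ofDigits_SurjOn (b := 2) one_lt_two
    (show (a + 1) / 2 ∈ Set.Icc (0 : ℝ) 1 by constructor <;> linarith)
  exact ⟨d, by rw [slope2, hd]; ring⟩

/-- The height above `x` of a line, translated by `x`, as a sum over the binary digits. -/
theorem hasSum_section (x : ℝ) (d : ℕ → Fin 2) :
    HasSum (fun i => (x - center i) * (d i : ℕ) * (1 / 2) ^ i)
      (slope2 d * x - shift d + x) := by
  have h : HasSum (Real.ofDigitsTerm d) (Real.ofDigits d) := Real.summable_ofDigitsTerm.hasSum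
  have h2 := (h.mul_left (2 * x)).sub (hasSum_shift d)
  have e : slope2 d * x - shift d + x = 2 * x * Real.ofDigits d - shift d := by
    rw [slope2]; ring
  rw [e]
  refine h2.congr_fun fun i => ?_
  simp only [Real.ofDigitsTerm, Nat.cast_ofNat, pow_succ, one_div, inv_pow, mul_inv]
  ring

/-! ### The planar set is closed and null -/

/-- Two lines whose first `m` digits agree are `4 ε 2^{-m}`-close above `x`. -/
theorem abs_section_sub_le {x ε : ℝ} {m : ℕ} (hm : ∀ j : ℕ, |x - center (m + j)| ≤ ε * (j + 1))
    {d d' : ℕ → Fin 2} (hd : ∀ i < m, d i = d' i) :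
    |(slope2 d * x - shift d) - (slope2 d' * x - shift d')| ≤ 4 * ε * (1 / 2) ^ m := by
  have h := (hasSum_section x d).sub (hasSum_section x d')
  rw [← hasSum_nat_add_iff' m, Finset.sum_eq_zero, sub_zero, add_sub_add_right_eq_sub] at h
  swap
  · intro i hi
    rw [hd i (Finset.mem_range.1 hi), sub_self]
  have hg : HasSum (fun j : ℕ => ε * (1 / 2) ^ m * ((j : ℝ) * (1 / 2) ^ j + (1 / 2) ^ j))
      (ε * (1 / 2) ^ m * (2 + 2)) :=
    (hasSum_nat_mul_half_pow.add hasSum_geometric_two).mul_left _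
  refine (h.norm_le_of_bounded hg fun j => ?_).trans_eq (by ring)
  have e : (x - center (j + m)) * (d (j + m) : ℕ) * (1 / 2) ^ (j + m)
      - (x - center (j + m)) * (d' (j + m) : ℕ) * (1 / 2) ^ (j + m)
      = (x - center (m + j)) * (((d (j + m) : ℕ) : ℝ) - (d' (j + m) : ℕ))
        * ((1 / 2) ^ m * (1 / 2) ^ j) := by
    rw [add_comm m j, pow_add]; ring
  have hdig : |((d (j + m) : ℕ) : ℝ) - (d' (j + m) : ℕ)| ≤ 1 := by
    have h1 := digit_le_one (d (j + m))
    have h2 := digit_le_one (d' (j + m))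
    rw [abs_le]
    constructor <;> linarith [Nat.cast_nonneg (α := ℝ) (d (j + m) : ℕ),
      Nat.cast_nonneg (α := ℝ) (d' (j + m) : ℕ)]
  rw [e, Real.norm_eq_abs, abs_mul, abs_mul,
    abs_of_nonneg (by positivity : (0 : ℝ) ≤ (1 / 2) ^ m * (1 / 2) ^ j)]
  calc _ ≤ ε * (j + 1) * 1 * ((1 / 2) ^ m * (1 / 2) ^ j) := by
        have := (abs_nonneg _).trans (hm j)
        gcongr
        exact hm j
    _ = _ := by ring

theorem volume_section (x : ℝ) : volume (Prod.mk x ⁻¹' lineSet) = 0 := by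
  have key : ∀ ε : ℝ, 0 < ε → volume (Prod.mk x ⁻¹' lineSet) ≤ ENNReal.ofReal (8 * ε) := by
    intro ε hε
    obtain ⟨m, hm⟩ := exists_abs_sub_center_le x hε
    -- One representative sequence for each choice of the first `m` digits.
    let ext : (Fin m → Fin 2) → ℕ → Fin 2 := fun u i => if h : i < m then u ⟨i, h⟩ else 0
    have hsub : Prod.mk x ⁻¹' lineSet ⊆ ⋃ u : Fin m → Fin 2,
        closedBall (slope2 (ext u) * x - shift (ext u)) (4 * ε * (1 / 2) ^ m) := by
      rintro y ⟨d, hy⟩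
      rw [Set.mem_iUnion]
      refine ⟨fun i => d i, ?_⟩
      simp only at hy
      rw [mem_closedBall, Real.dist_eq, hy]
      exact abs_section_sub_le hm fun i hi => by simp [ext, hi]
    calc _ ≤ _ := measure_mono hsub
      _ ≤ _ := measure_iUnion_fintype_le _ _
      _ = ENNReal.ofReal (2 ^ m * (2 * (4 * ε * (1 / 2) ^ m))) := by
        simp only [Real.volume_closedBall, Finset.sum_const, Finset.card_univ, Fintype.card_fun,
          Fintype.card_fin, nsmul_eq_mul]
        rw [ENNReal.ofReal_mul (p := 2 ^ m) (by positivity), ENNReal.ofReal_pow (by norm_num)]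
        simp
      _ = _ := by
        congr 1
        have : (2 : ℝ) ^ m * (1 / 2) ^ m = 1 := by rw [← mul_pow]; norm_num
        linear_combination (8 * ε) * this
  refine le_antisymm (ENNReal.le_of_forall_pos_le_add fun ε hε _ => ?_) (zero_le)
  refine (key (ε / 8) (by positivity)).trans ?_
  rw [zero_add, mul_div_cancel₀ _ (by norm_num), ENNReal.ofReal_coe_nnreal]

theorem isClosed_lineSet : IsClosed lineSet := by
  have h : IsClosed {q : (ℝ × ℝ) × (ℕ → Fin 2) | q.1.2 = slope2 q.2 * q.1.1 - shift q.2} := by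
    have := continuous_slope2
    have := continuous_shift
    exact isClosed_eq (by fun_prop) (by fun_prop)
  convert isClosedMap_fst_of_compactSpace _ h using 1
  ext p
  simp [lineSet]

theorem volume_lineSet : volume lineSet = 0 := by
  rw [Measure.volume_eq_prod, Measure.measure_prod_null isClosed_lineSet.measurableSet]
  exact Filter.Eventually.of_forall volume_section

/-! ### Passage to dimension `n` -/

/-- The points of `ℝⁿ` whose coordinates `i`, `j` give a point of `lineSet`. -/
def cyl {n : ℕ} (i j : Fin n) : Set (EuclideanSpace ℝ (Fin n)) := {p | (p i, p j) ∈ lineSet}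

theorem isClosed_cyl {n : ℕ} (i j : Fin n) : IsClosed (cyl i j) :=
  isClosed_lineSet.preimage (by fun_prop)

theorem volume_cyl {n : ℕ} {i j : Fin n} (hij : i ≠ j) : volume (cyl i j) = 0 := by
  let L : EuclideanSpace ℝ (Fin n) →ₗ[ℝ] ℝ × ℝ :=
    { toFun := fun p => (p i, p j)
      map_add' := fun _ _ => rfl
      map_smul' := fun _ _ => rfl }
  have hL : Function.Surjective L := by
    rintro ⟨a, b⟩
    refine ⟨WithLp.toLp 2 fun k => if k = i then a else b, ?_⟩
    change ((if i = i then a else b : ℝ), (if j = i then a else b : ℝ)) = (a, b)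
    rw [if_pos rfl, if_neg hij.symm]
  obtain ⟨c, -, hc⟩ := L.exists_map_addHaar_eq_smul_addHaar
    (volume : Measure (EuclideanSpace ℝ (Fin n))) (volume : Measure (ℝ × ℝ)) hL
  have hcont : Continuous L := L.continuous_of_finiteDimensional
  have h : volume (L ⁻¹' lineSet) = 0 := by
    rw [← Measure.map_apply hcont.measurable isClosed_lineSet.measurableSet, hc]
    simp [volume_lineSet]
  exact h

theorem exists_line_cyl {n : ℕ} {i j : Fin n} (hij : i ≠ j) {e : EuclideanSpace ℝ (Fin n)} {a : ℝ}
    (ha : |a| ≤ 1) (he : e j = a * e i) :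
    ∃ b : EuclideanSpace ℝ (Fin n), ‖b‖ ≤ 2 ∧ ∀ t : ℝ, b + t • e ∈ cyl i j := by
  obtain ⟨d, rfl⟩ := exists_slope2_eq ha
  refine ⟨EuclideanSpace.single j (-shift d), by simpa using abs_shift_le d, fun t => ⟨d, ?_⟩⟩
  simp [hij, he]
  ring

theorem exists_eq_mul_of_abs_le {u v : ℝ} (h : |v| ≤ |u|) : ∃ a : ℝ, |a| ≤ 1 ∧ v = a * u := by
  rcases eq_or_ne u 0 with rfl | hu
  · exact ⟨0, by simp, by simpa using h⟩
  · exact ⟨v / u, by rw [abs_div]; exact div_le_one_of_le₀ h (abs_nonneg _), by field_simp⟩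

/-- Existence of Besicovitch sets: for every `n ≥ 2` there is a Borel set
`B ⊆ ℝⁿ` of Lebesgue measure zero containing a whole line in every direction,
and moreover there is a compact set `K ⊆ ℝⁿ` of Lebesgue measure zero
containing a unit line segment in every direction. -/
theorem besicovitch_sets_exist (n : ℕ) (hn : 2 ≤ n) :
    (∃ B : Set (EuclideanSpace ℝ (Fin n)), MeasurableSet B ∧ volume B = 0 ∧
      ∀ e ∈ sphere (0 : EuclideanSpace ℝ (Fin n)) 1,
        ∃ b : EuclideanSpace ℝ (Fin n), ∀ t : ℝ, b + t • e ∈ B) ∧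
    (∃ K : Set (EuclideanSpace ℝ (Fin n)), IsCompact K ∧ volume K = 0 ∧
      ∀ e ∈ sphere (0 : EuclideanSpace ℝ (Fin n)) 1,
        ∃ b : EuclideanSpace ℝ (Fin n), ∀ t ∈ Set.Icc (0 : ℝ) 1,
          b + t • e ∈ K) := by
  let i : Fin n := ⟨0, by omega⟩
  let j : Fin n := ⟨1, by omega⟩
  have hij : i ≠ j := by simp [i, j]
  have hclosed : IsClosed (cyl i j ∪ cyl j i) := (isClosed_cyl i j).union (isClosed_cyl j i)
  have hnull : volume (cyl i j ∪ cyl j i) = 0 :=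
    measure_union_null (volume_cyl hij) (volume_cyl hij.symm)
  have hline : ∀ e : EuclideanSpace ℝ (Fin n), ∃ b : EuclideanSpace ℝ (Fin n),
      ‖b‖ ≤ 2 ∧ ∀ t : ℝ, b + t • e ∈ cyl i j ∪ cyl j i := by
    intro e
    rcases le_total |e j| |e i| with h | h
    · obtain ⟨a, ha, hae⟩ := exists_eq_mul_of_abs_le h
      obtain ⟨b, hb, hbt⟩ := exists_line_cyl hij ha hae
      exact ⟨b, hb, fun t => Or.inl (hbt t)⟩
    · obtain ⟨a, ha, hae⟩ := exists_eq_mul_of_abs_le h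
      obtain ⟨b, hb, hbt⟩ := exists_line_cyl hij.symm ha hae
      exact ⟨b, hb, fun t => Or.inr (hbt t)⟩
  refine ⟨⟨_, hclosed.measurableSet, hnull, fun e _ => ?_⟩,
    ⟨(cyl i j ∪ cyl j i) ∩ closedBall 0 3, (isCompact_closedBall 0 3).inter_left hclosed,
      measure_mono_null Set.inter_subset_left hnull, fun e he => ?_⟩⟩
  · obtain ⟨b, -, hb⟩ := hline e
    exact ⟨b, hb⟩
  · obtain ⟨b, hb2, hb⟩ := hline e
    refine ⟨b, fun t ht => ⟨hb t, ?_⟩⟩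
    have he1 : ‖e‖ = 1 := by simpa using he
    rw [mem_closedBall_zero_iff]
    calc _ ≤ ‖b‖ + ‖t • e‖ := norm_add_le _ _
      _ ≤ 2 + 1 := by
        gcongr
        rw [norm_smul, he1, mul_one, Real.norm_of_nonneg ht.1]
        exact ht.2
      _ = 3 := by norm_num
end

section
/- Let n ≥ 2 and let B ⊂ ℝⁿ be a set such that for every unit vector e ∈ S^{n-1} there exists b ∈ ℝⁿ with {b + t·e : t ∈ [0, 1]} ⊂ B. Then dim B ≥ 2. -/
open MeasureTheory Metric
open scoped ENNReal

/-!
The proof is an energy estimate. Fix `1 < s < 2`, put `p = s - 1`, and suppose `μH[s] B = 0`. Let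
`e θ`, `0 ≤ θ < 1`, be the unit vectors of a fixed plane at angle `θ`, and let `B` contain the
segments `t ↦ b θ + t • e θ`. Cover `B` by open sets of diameter at most `d i` with
`∑ d i ^ s ≤ ε`, made disjoint as `U i`, and let `g θ i` be the length of the part of the segment
`θ` lying in `U i`. For each `θ` these lengths add up to `1`, so Cauchy-Schwarz bounds `1` by
`∑ d i ^ s` times the average over pairs `(θ, φ)` of the energy
`∑ i, g θ i * g φ i * d i ^ (-s)`.

If both segments meet `U i`, then `g φ i ≤ d i`, and a point of the segment `θ` in `U i` is within
`d i` of the line containing the segment `φ`. Its distance from that line is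
`|β + t * sin (θ - φ)|` for some `β` that does not depend on `t`, so the energy is at most
`∫ |β + t * sin (θ - φ)| ^ (-p)` over `0 ≤ t ≤ 1`, which is `O(|sin (θ - φ)| ^ (-p))` because
`p < 1` (`pair_energy_far`, `exists_lintegral_affine_absPow_le`). This is integrable in `(θ, φ)`,
again because `p < 1`, so the average is bounded independently of the cover, and a small `ε` gives
a contradiction.

As `B` is arbitrary, `b` need not be measurable, so the average over pairs is taken over a finite
sample of angles. By compactness each segment is covered by finitely many of the open sets, and by
continuity from below of outer measure some fixed finite number of them suffices for a set `A` of
angles of outer measure greater than `1 / 2`. For large `M`, one angle of `A` is taken in each of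
the at least `M / 2` intervals `[j / M, (j + 1) / M)` that meet `A` (`exists_sample`). Pairs of
angles from equal or adjacent intervals have energy at most `(min d i) ^ (-p)`
(`pair_energy_near`); they are so few that their contribution vanishes as `M` grows. The double
sum over pairs is estimated in `sum_sq_le_of_pair_energy_le`.
-/

/-! ### The singular kernel `|x| ^ (-p)` -/

lemma measurable_absPow (p : ℝ) : Measurable (fun u : ℝ => ENNReal.ofReal |u| ^ (-p)) := by
  fun_prop

lemma lintegral_ball_absPow_lt_top {p : ℝ} (hp1 : p < 1) :
    ∫⁻ u in ball (0 : ℝ) 1, ENNReal.ofReal |u| ^ (-p) < ∞ := by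
  have h1 : IntegrableOn (fun u : ℝ => |u| ^ (-p)) (ball 0 1) := by
    refine integrableOn_ball_of_norm_le_rpow (C := 1) (α := p) (by simp) (by simpa using hp1)
      (Filter.Eventually.of_forall fun x => ?_)
      (by fun_prop : Measurable fun u : ℝ => |u| ^ (-p)).aestronglyMeasurable
    simp only [Real.norm_eq_abs, one_mul]
    rw [abs_of_nonneg (by positivity)]
  have h2 := h1.hasFiniteIntegral
  rw [HasFiniteIntegral] at h2
  refine lt_of_le_of_lt (le_of_eq (lintegral_congr_ae ?_)) h2
  have h0 : ∀ᵐ x : ℝ ∂volume.restrict (ball 0 1), x ≠ 0 :=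
    ae_restrict_of_ae (Measure.ae_ne volume 0)
  filter_upwards [h0] with x hx
  rw [ENNReal.ofReal_rpow_of_pos (by positivity), Real.enorm_of_nonneg (by positivity)]

/-- The integral of `|β + t * m| ^ (-p)` over the unit interval is `O(|m| ^ (-p))` uniformly in `β`.
The powers are taken in `ℝ≥0∞`, so they equal `∞` at the zero of the affine function. -/
lemma exists_lintegral_affine_absPow_le {p : ℝ} (hp0 : 0 < p) (hp1 : p < 1) :
    ∃ C : ℝ≥0∞, C ≠ ∞ ∧ ∀ β m : ℝ,
      ∫⁻ t in Set.Icc (0 : ℝ) 1, ENNReal.ofReal |β + t * m| ^ (-p)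
        ≤ C * ENNReal.ofReal |m| ^ (-p) := by
  set F : ℝ → ℝ≥0∞ := fun u => ENNReal.ofReal |u| ^ (-p) with hF
  have hFm : Measurable F := measurable_absPow p
  refine ⟨1 + ∫⁻ u in ball (0 : ℝ) 1, F u,
    ENNReal.add_ne_top.2 ⟨by simp, (lintegral_ball_absPow_lt_top hp1).ne⟩, fun β m => ?_⟩
  rcases eq_or_ne m 0 with rfl | hm
  · simp [hp0]
  have hsplit : ∀ t : ℝ, F (β + t * m) = F m * F (t + β / m) := by
    intro t
    simp only [hF]
    rw [← ENNReal.mul_rpow_of_ne_top ENNReal.ofReal_ne_top ENNReal.ofReal_ne_top,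
      ← ENNReal.ofReal_mul (abs_nonneg _), ← abs_mul]
    congr 3
    field_simp
    ring
  have hle : ∀ u : ℝ, F u ≤ 1 + (ball (0 : ℝ) 1).indicator F u := by
    intro u
    by_cases hu : u ∈ ball (0 : ℝ) 1
    · simp [hu]
    · rw [Set.indicator_of_notMem hu, add_zero]
      have : 1 ≤ |u| := by simpa using hu
      simp only [hF]
      rw [ENNReal.rpow_neg, ENNReal.inv_le_one]
      exact ENNReal.one_le_rpow (by simpa using this) hp0
  calc ∫⁻ t in Set.Icc (0 : ℝ) 1, F (β + t * m)
      = F m * ∫⁻ t in Set.Icc (0 : ℝ) 1, F (t + β / m) := by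
        simp_rw [hsplit]
        rw [lintegral_const_mul _ (by fun_prop)]
    _ ≤ F m * ∫⁻ t in Set.Icc (0 : ℝ) 1, (1 + (ball (0 : ℝ) 1).indicator F (t + β / m)) := by
        gcongr with t
        exact hle _
    _ ≤ F m * (1 + ∫⁻ t, (ball (0 : ℝ) 1).indicator F (t + β / m)) := by
        rw [lintegral_add_left (by fun_prop)]
        gcongr
        · simp
        · exact Measure.restrict_le_self
    _ = (1 + ∫⁻ u in ball (0 : ℝ) 1, F u) * F m := by
        rw [lintegral_add_right_eq_self (fun u => (ball (0 : ℝ) 1).indicator F u),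
          lintegral_indicator measurableSet_ball, mul_comm]

/-- Comparison of a power sum with its integral; the sum telescopes by Bernoulli's inequality
`(1 - 1 / (M + 1)) ^ (1 - p) ≤ 1 - (1 - p) / (M + 1)`. -/
lemma sum_range_rpow_neg_le {p : ℝ} (hp0 : 0 < p) (hp1 : p < 1) (M : ℕ) :
    ∑ m ∈ Finset.range M, ((m : ℝ) + 1) ^ (-p) ≤ (M : ℝ) ^ (1 - p) / (1 - p) := by
  have h1p : 0 < 1 - p := by linarith
  induction M with
  | zero => simp [h1p.ne']
  | succ M ih =>
    rw [Finset.sum_range_succ]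
    have hM : (0 : ℝ) < M + 1 := by positivity
    have hb := rpow_one_add_le_one_add_mul_self (s := -1 / ((M : ℝ) + 1))
      (by rw [le_div_iff₀ hM]; linarith [(Nat.cast_nonneg M : (0:ℝ) ≤ M)]) h1p.le (by linarith)
    have e1 : 1 + -1 / ((M : ℝ) + 1) = M / (M + 1) := by field_simp; ring
    have e2 : ((M : ℝ) + 1) ^ (-p) = (M + 1) ^ (1 - p) / (M + 1) := by
      rw [← Real.rpow_sub_one hM.ne']; congr 1; ring
    rw [e1, Real.div_rpow (by positivity) hM.le, div_le_iff₀ (by positivity)] at hb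
    have key : (M : ℝ) ^ (1 - p) + (1 - p) * (M + 1) ^ (-p) ≤ (M + 1) ^ (1 - p) := by
      rw [e2]
      calc _ ≤ (1 + (1 - p) * (-1 / (M + 1))) * ((M : ℝ) + 1) ^ (1 - p)
            + (1 - p) * ((M + 1) ^ (1 - p) / (M + 1)) := by gcongr
        _ = _ := by ring
    push_cast
    calc _ ≤ (M : ℝ) ^ (1 - p) / (1 - p) + ((M : ℝ) + 1) ^ (-p) := by gcongr
      _ = ((M : ℝ) ^ (1 - p) + (1 - p) * (M + 1) ^ (-p)) / (1 - p) := by field_simp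
      _ ≤ _ := by gcongr

/-- Each distance from `j` is attained by at most two integers. -/
lemma sum_dist_le (h : ℕ → ℝ) (hh : ∀ m, 0 ≤ h m) (M j : ℕ) (hj : j < M) :
    ∑ k ∈ Finset.range M, h (Nat.dist j k) ≤ 2 * ∑ m ∈ Finset.range M, h m := by
  have h1 : ∑ k ∈ Finset.range M with k ≤ j, h (Nat.dist j k) ≤ ∑ m ∈ Finset.range M, h m := by
    have inj : Set.InjOn (Nat.dist j) (Finset.range M |>.filter (· ≤ j)) := by
      intro a ha b hb hab
      simp [Nat.dist] at ha hb hab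
      omega
    rw [← Finset.sum_image inj]
    refine Finset.sum_le_sum_of_subset_of_nonneg ?_ (fun _ _ _ => hh _)
    intro x hx
    simp [Nat.dist] at hx ⊢
    omega
  have h2 : ∑ k ∈ Finset.range M with ¬ k ≤ j, h (Nat.dist j k) ≤ ∑ m ∈ Finset.range M, h m := by
    have inj : Set.InjOn (Nat.dist j) (Finset.range M |>.filter (¬ · ≤ j)) := by
      intro a ha b hb hab
      simp [Nat.dist] at ha hb hab
      omega
    rw [← Finset.sum_image inj]
    refine Finset.sum_le_sum_of_subset_of_nonneg ?_ (fun _ _ _ => hh _)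
    intro x hx
    simp [Nat.dist] at hx ⊢
    omega
  rw [← Finset.sum_filter_add_sum_filter_not _ (· ≤ j)]
  linarith


/-! ### Pair energies of segments -/

section
variable {E : Type*} [NormedAddCommGroup E] [InnerProductSpace ℝ E]

/-- The set of times `t ∈ [0, 1]` at which the segment `t ↦ b + t • e` lies in `U`. -/
def hitTimes (b e : E) (U : Set E) : Set ℝ := {t | t ∈ Set.Icc (0 : ℝ) 1 ∧ b + t • e ∈ U}

lemma hitTimes_subset (b e : E) (U : Set E) : hitTimes b e U ⊆ Set.Icc 0 1 := fun _ h => h.1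

lemma volume_hitTimes_ne_top (b e : E) (U : Set E) : volume (hitTimes b e U) ≠ ∞ :=
  measure_ne_top_of_subset (hitTimes_subset b e U) (by simp)

lemma volume_hitTimes_le {b e : E} (he : ‖e‖ = 1) {U : Set E} {d : ℝ}
    (hU : ∀ x ∈ U, ∀ y ∈ U, dist x y ≤ d) : volume (hitTimes b e U) ≤ ENNReal.ofReal d := by
  refine (Real.volume_le_diam _).trans (ediam_le fun t ht t' ht' => ?_)
  rw [edist_dist]
  refine ENNReal.ofReal_le_ofReal ?_
  have := hU _ ht.2 _ ht'.2
  rwa [dist_add_left, dist_eq_norm, ← sub_smul, norm_smul, he, mul_one, ← dist_eq_norm] at this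

variable [MeasurableSpace E] [BorelSpace E]

lemma measurableSet_hitTimes (b e : E) {U : Set E} (hU : MeasurableSet U) :
    MeasurableSet (hitTimes b e U) :=
  measurableSet_Icc.inter ((by fun_prop : Continuous fun t : ℝ => b + t • e).measurable hU)

omit [MeasurableSpace E] [BorelSpace E] in
lemma disjoint_hitTimes (b e : E) {U V : Set E} (h : Disjoint U V) :
    Disjoint (hitTimes b e U) (hitTimes b e V) :=
  Set.disjoint_left.2 fun _ hx hy => Set.disjoint_left.1 h hx.2 hy.2

lemma sum_volume_hitTimes (b e : E) {U : ℕ → Set E} (hUm : ∀ i, MeasurableSet (U i))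
    (hUd : Pairwise (Function.onFun Disjoint U)) (I : Finset ℕ) :
    ∑ i ∈ I, volume (hitTimes b e (U i)) = volume (hitTimes b e (⋃ i ∈ I, U i)) := by
  rw [← measure_biUnion_finset (fun i _ j _ hij => disjoint_hitTimes b e (hUd hij))
    (fun i _ => measurableSet_hitTimes b e (hUm i))]
  congr 1
  ext t
  simp only [hitTimes, Set.mem_iUnion, Set.mem_ofPred_eq, exists_prop]
  tauto

omit [MeasurableSpace E] [BorelSpace E] in
lemma volume_mul_volume_mul_rpow_le {b e : E} {f : E} {b' : E} (hf : ‖f‖ = 1) {U : Set E} {d : ℝ}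
    (hd : 0 < d) (hU : ∀ x ∈ U, ∀ y ∈ U, dist x y ≤ d) (p : ℝ) :
    volume (hitTimes b e U) * volume (hitTimes b' f U) * ENNReal.ofReal d ^ (-(1 + p))
      ≤ volume (hitTimes b e U) * ENNReal.ofReal d ^ (-p) := by
  rw [mul_assoc]
  gcongr
  calc volume (hitTimes b' f U) * ENNReal.ofReal d ^ (-(1 + p))
      ≤ ENNReal.ofReal d * ENNReal.ofReal d ^ (-(1 + p)) := by
        gcongr; exact volume_hitTimes_le hf hU
    _ = ENNReal.ofReal d ^ (-p) := by
        have h0 : ENNReal.ofReal d ≠ 0 := by simpa using hd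
        nth_rewrite 1 [← ENNReal.rpow_one (ENNReal.ofReal d)]
        rw [← ENNReal.rpow_add _ _ h0 ENNReal.ofReal_ne_top]
        congr 1; ring

/-- A bound for the energy of any two segments which degenerates with the smallest set `U i`. -/
lemma pair_energy_near {b e b' f : E} (hf : ‖f‖ = 1) {U : ℕ → Set E}
    (hUm : ∀ i, MeasurableSet (U i)) (hUd : Pairwise (Function.onFun Disjoint U))
    {d : ℕ → ℝ} (hd : ∀ i, 0 < d i) (hU : ∀ i, ∀ x ∈ U i, ∀ y ∈ U i, dist x y ≤ d i)
    {p : ℝ} (hp : 0 < p) (I : Finset ℕ) {δ : ℝ} (hδ : ∀ i ∈ I, δ ≤ d i) :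
    ∑ i ∈ I, volume (hitTimes b e (U i)) * volume (hitTimes b' f (U i))
        * ENNReal.ofReal (d i) ^ (-(1 + p)) ≤ ENNReal.ofReal δ ^ (-p) := by
  calc _ ≤ ∑ i ∈ I, volume (hitTimes b e (U i)) * ENNReal.ofReal δ ^ (-p) := by
        refine Finset.sum_le_sum fun i hi =>
          (volume_mul_volume_mul_rpow_le hf (hd i) (hU i) p).trans ?_
        gcongr volume _ * ?_
        rw [ENNReal.rpow_neg, ENNReal.rpow_neg]
        gcongr
        exact hδ i hi
    _ = volume (hitTimes b e (⋃ i ∈ I, U i)) * ENNReal.ofReal δ ^ (-p) := by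
        rw [← Finset.sum_mul, sum_volume_hitTimes b e hUm hUd]
    _ ≤ volume (Set.Icc (0 : ℝ) 1) * ENNReal.ofReal δ ^ (-p) := by
        gcongr; exact hitTimes_subset _ _ _
    _ = _ := by simp

/-- A bound for the energy of two segments that does not depend on the sets `U i`: if the segment in
direction `f` meets `U i`, then a point of the other segment in `U i` is within `d i` of that
segment, and `w`, which is orthogonal to `f`, bounds this distance from below. -/
lemma pair_energy_far {b e b' f w : E} (hf : ‖f‖ = 1) (hw : ‖w‖ = 1) (hfw : inner ℝ w f = 0)
    {U : ℕ → Set E}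
    (hUm : ∀ i, MeasurableSet (U i)) (hUd : Pairwise (Function.onFun Disjoint U))
    {d : ℕ → ℝ} (hd : ∀ i, 0 < d i) (hU : ∀ i, ∀ x ∈ U i, ∀ y ∈ U i, dist x y ≤ d i)
    {p : ℝ} (hp : 0 < p) (I : Finset ℕ) :
    ∑ i ∈ I, volume (hitTimes b e (U i)) * volume (hitTimes b' f (U i))
        * ENNReal.ofReal (d i) ^ (-(1 + p))
      ≤ ∫⁻ t in Set.Icc (0 : ℝ) 1,
          ENNReal.ofReal |inner ℝ w (b - b') + t * inner ℝ w e| ^ (-p) := by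
  set W : ℝ → ℝ≥0∞ := fun t => ENNReal.ofReal |inner ℝ w (b - b') + t * inner ℝ w e| ^ (-p)
  have key : ∀ i, volume (hitTimes b e (U i)) * volume (hitTimes b' f (U i))
        * ENNReal.ofReal (d i) ^ (-(1 + p)) ≤ ∫⁻ t in hitTimes b e (U i), W t := by
    intro i
    rcases (hitTimes b' f (U i)).eq_empty_or_nonempty with h | ⟨t', ht'⟩
    · simp [h]
    refine (volume_mul_volume_mul_rpow_le hf (hd i) (hU i) p).trans ?_
    rw [mul_comm, ← setLIntegral_const]
    refine setLIntegral_mono' (measurableSet_hitTimes b e (hUm i)) fun t ht => ?_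
    simp only [W]
    rw [ENNReal.rpow_neg, ENNReal.rpow_neg]
    gcongr
    have h1 : inner ℝ w (b - b') + t * inner ℝ w e
        = inner ℝ w ((b + t • e) - (b' + t' • f)) := by
      simp only [inner_sub_right, inner_add_right, inner_smul_right, hfw]; ring
    rw [h1]
    calc _ ≤ ‖w‖ * ‖(b + t • e) - (b' + t' • f)‖ := abs_real_inner_le_norm _ _
      _ ≤ d i := by rw [hw, one_mul, ← dist_eq_norm]; exact hU i _ ht.2 _ ht'.2
  calc _ ≤ ∑ i ∈ I, ∫⁻ t in hitTimes b e (U i), W t := Finset.sum_le_sum fun i _ => key i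
    _ = ∫⁻ t in ⋃ i ∈ I, hitTimes b e (U i), W t :=
        (lintegral_biUnion_finset (fun i _ j _ hij => disjoint_hitTimes b e (hUd hij))
          (fun i _ => measurableSet_hitTimes b e (hUm i)) _).symm
    _ ≤ _ := lintegral_mono_set (Set.iUnion₂_subset fun i _ => hitTimes_subset _ _ _)
end

/-! ### Cauchy-Schwarz, covers and samples -/

/-- The Cauchy-Schwarz step: here `g j i` stands for the length of the `j`-th sampled segment inside
`U i`, and `h` bounds pair energies in terms of the separation of the indices. -/
lemma sum_sq_le_of_pair_energy_le (M : ℕ) (S : Finset ℕ) (hS : S ⊆ Finset.range M) (hcard : (M : ℝ) / 2 ≤ S.card)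
    (I : Finset ℕ) (g : ℕ → ℕ → ℝ) (d : ℕ → ℝ) (hd : ∀ i, 0 < d i)
    (s : ℝ) (h1 : ∀ j ∈ S, ∑ i ∈ I, g j i = 1) (h : ℕ → ℝ) (h0 : ∀ m, 0 ≤ h m)
    (hK : ∀ j ∈ S, ∀ k ∈ S, ∑ i ∈ I, g j i * g k i * d i ^ (-s) ≤ h (Nat.dist j k)) :
    ((M : ℝ) / 2) ^ 2 ≤ (∑ i ∈ I, d i ^ s) * (M * (2 * ∑ m ∈ Finset.range M, h m)) := by
  have e1 : (S.card : ℝ) = ∑ i ∈ I, ∑ j ∈ S, g j i := by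
    rw [Finset.sum_comm, Finset.sum_congr rfl h1]; simp
  have cs := Finset.sum_sq_le_sum_mul_sum_of_sq_le_mul I (r := fun i => ∑ j ∈ S, g j i)
    (f := fun i => d i ^ s) (g := fun i => (∑ j ∈ S, g j i) ^ 2 * d i ^ (-s))
    (fun i _ => (Real.rpow_pos_of_pos (hd i) _).le)
    (fun i _ => mul_nonneg (sq_nonneg _) (Real.rpow_pos_of_pos (hd i) _).le)
    (fun i _ => by
      rw [mul_left_comm, ← Real.rpow_add (hd i)]; simp)
  have e2 : ∑ i ∈ I, (∑ j ∈ S, g j i) ^ 2 * d i ^ (-s)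
      = ∑ j ∈ S, ∑ k ∈ S, ∑ i ∈ I, g j i * g k i * d i ^ (-s) := by
    simp_rw [sq, Finset.sum_mul_sum, Finset.sum_mul]
    rw [Finset.sum_comm]
    exact Finset.sum_congr rfl fun j _ => Finset.sum_comm
  have hsum : ∑ j ∈ S, ∑ k ∈ S, ∑ i ∈ I, g j i * g k i * d i ^ (-s)
      ≤ M * (2 * ∑ m ∈ Finset.range M, h m) := by
    calc _ ≤ ∑ j ∈ S, ∑ k ∈ Finset.range M, h (Nat.dist j k) := by
          refine Finset.sum_le_sum fun j hj => ?_
          exact (Finset.sum_le_sum fun k hk => hK j hj k hk).trans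
            (Finset.sum_le_sum_of_subset_of_nonneg hS fun _ _ _ => h0 _)
      _ ≤ ∑ j ∈ Finset.range M, ∑ k ∈ Finset.range M, h (Nat.dist j k) :=
          Finset.sum_le_sum_of_subset_of_nonneg hS fun _ _ _ => Finset.sum_nonneg fun _ _ => h0 _
      _ ≤ ∑ j ∈ Finset.range M, 2 * ∑ m ∈ Finset.range M, h m :=
          Finset.sum_le_sum fun j hj => sum_dist_le h h0 M j (Finset.mem_range.1 hj)
      _ = _ := by simp
  calc ((M : ℝ) / 2) ^ 2 ≤ (S.card : ℝ) ^ 2 := by gcongr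
    _ ≤ (∑ i ∈ I, d i ^ s) * ∑ i ∈ I, (∑ j ∈ S, g j i) ^ 2 * d i ^ (-s) := by rw [e1]; exact cs
    _ ≤ _ := by
      rw [e2]
      exact mul_le_mul_of_nonneg_left hsum
        (Finset.sum_nonneg fun i _ => (Real.rpow_pos_of_pos (hd i) _).le)

/-- A set of zero `s`-dimensional Hausdorff measure has countable covers by open sets with
arbitrarily small sum of `s`-th powers of diameters; `d i` is a positive bound for the diameter. -/
lemma exists_open_cover {E : Type*} [MetricSpace E] [MeasurableSpace E] [BorelSpace E]
    {s : ℝ} (hs : 0 < s) {B : Set E} (hB : Measure.hausdorffMeasure s B = 0)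
    {ε : ℝ} (hε : 0 < ε) :
    ∃ (U : ℕ → Set E) (d : ℕ → ℝ), (∀ i, IsOpen (U i)) ∧ (∀ i, 0 < d i) ∧
      (∀ i, ∀ x ∈ U i, ∀ y ∈ U i, dist x y ≤ d i) ∧ B ⊆ ⋃ i, U i ∧
      ∀ I : Finset ℕ, ∑ i ∈ I, d i ^ s ≤ ε := by
  have hε2 : 0 < ENNReal.ofReal (ε / 2) := by simpa using hε
  have h1 : (⨅ (t : ℕ → Set E) (_ : B ⊆ ⋃ n, t n) (_ : ∀ n, ediam (t n) ≤ 1),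
          ∑' n, ⨆ _ : (t n).Nonempty, ediam (t n) ^ s) < ENNReal.ofReal (ε / 2) := by
    refine lt_of_le_of_lt ?_ hε2
    rw [← hB, Measure.hausdorffMeasure_apply]
    exact le_iSup₂ (f := fun (r : ℝ≥0∞) (_ : 0 < r) =>
      ⨅ (t : ℕ → Set E) (_ : B ⊆ ⋃ n, t n) (_ : ∀ n, ediam (t n) ≤ r),
          ∑' n, ⨆ _ : (t n).Nonempty, ediam (t n) ^ s) 1 one_pos
  simp only [iInf_lt_iff] at h1
  obtain ⟨t, htB, ht1, hts⟩ := h1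
  obtain ⟨η, hη0, hη⟩ := ENNReal.exists_pos_sum_of_countable hε2.ne' ℕ
  have hfin : ∀ i, ediam (t i) ≠ ∞ := fun i => ((ht1 i).trans_lt ENNReal.one_lt_top).ne
  set D : ℕ → ℝ := fun i => diam (t i)
  have hD0 : ∀ i, 0 ≤ D i := fun i => diam_nonneg
  set d : ℕ → ℝ := fun i => (D i ^ s + η i) ^ (1 / s)
  have hsum0 : ∀ i, 0 < D i ^ s + (η i : ℝ) := fun i =>
    add_pos_of_nonneg_of_pos (Real.rpow_nonneg (hD0 i) _) (by exact_mod_cast hη0 i)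
  have hds : ∀ i, d i ^ s = D i ^ s + η i := fun i => by
    simp only [d]
    rw [← Real.rpow_mul (hsum0 i).le, one_div_mul_cancel hs.ne', Real.rpow_one]
  have hd0 : ∀ i, 0 < d i := fun i => Real.rpow_pos_of_pos (hsum0 i) _
  have hDd : ∀ i, D i < d i := fun i => by
    rw [← Real.rpow_lt_rpow_iff (hD0 i) (hd0 i).le hs, hds]
    have : (0 : ℝ) < η i := by exact_mod_cast hη0 i
    linarith
  refine ⟨fun i => thickening ((d i - D i) / 2) (t i), d, fun i => isOpen_thickening, hd0,
    fun i x hx y hy => ?_, fun x hx => ?_, fun I => ?_⟩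
  · obtain ⟨x', hx', hxx⟩ := mem_thickening_iff.1 hx
    obtain ⟨y', hy', hyy⟩ := mem_thickening_iff.1 hy
    have h2 : dist x' y' ≤ D i := dist_le_diam_of_mem' (hfin i) hx' hy'
    have h3 := dist_triangle4 x x' y' y
    rw [dist_comm y' y] at h3
    linarith
  · obtain ⟨i, hi⟩ := Set.mem_iUnion.1 (htB hx)
    exact Set.mem_iUnion.2 ⟨i, self_subset_thickening (by linarith [hDd i]) _ hi⟩
  · have h5 : ∀ i, ENNReal.ofReal (d i ^ s)
        = (⨆ _ : (t i).Nonempty, ediam (t i) ^ s) + η i := by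
      intro i
      rw [hds, ENNReal.ofReal_add (Real.rpow_nonneg (hD0 i) _) (by positivity),
        ENNReal.ofReal_coe_nnreal]
      congr 1
      rw [← ENNReal.ofReal_rpow_of_nonneg (hD0 i) hs.le]
      simp only [D, diam]
      rw [ENNReal.ofReal_toReal (hfin i)]
      rcases (t i).eq_empty_or_nonempty with h | h
      · simp [h, hs]
      · simp [h]
    have h6 : ENNReal.ofReal (∑ i ∈ I, d i ^ s) ≤ ENNReal.ofReal ε := by
      rw [ENNReal.ofReal_sum_of_nonneg (fun i _ => (Real.rpow_pos_of_pos (hd0 i) _).le)]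
      calc _ ≤ ∑' i, ENNReal.ofReal (d i ^ s) := ENNReal.sum_le_tsum _
        _ = _ := by simp_rw [h5]; exact ENNReal.tsum_add
        _ ≤ ENNReal.ofReal (ε / 2) + ENNReal.ofReal (ε / 2) := add_le_add hts.le hη.le
        _ = ENNReal.ofReal ε := by rw [← ENNReal.ofReal_add (by linarith) (by linarith)]; simp
    exact (ENNReal.ofReal_le_ofReal_iff hε.le).1 h6

/-- A set `A ⊆ [0, 1)`, possibly non-measurable, of outer measure at least `1 / 2` meets at least
`M / 2` of the `M` intervals `[j / M, (j + 1) / M)`. -/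
lemma exists_sample {A : Set ℝ} (hA : A ⊆ Set.Ico 0 1) (hvol : ENNReal.ofReal (1 / 2) ≤ volume A)
    {M : ℕ} (hM : 0 < M) :
    ∃ (S : Finset ℕ) (θ : ℕ → ℝ), S ⊆ Finset.range M ∧ (M : ℝ) / 2 ≤ S.card ∧
      ∀ j ∈ S, θ j ∈ A ∧ (j : ℝ) ≤ M * θ j ∧ M * θ j < j + 1 := by
  classical
  have hM' : (0 : ℝ) < M := by exact_mod_cast hM
  set c : ℕ → Set ℝ := fun j => Set.Ico ((j : ℝ) / M) ((j + 1) / M)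
  set S := (Finset.range M).filter fun j => (A ∩ c j).Nonempty
  have hex : ∀ j, ∃ x, j ∈ S → x ∈ A ∩ c j := fun j => by
    by_cases hj : j ∈ S
    · obtain ⟨x, hx⟩ := (Finset.mem_filter.1 hj).2
      exact ⟨x, fun _ => hx⟩
    · exact ⟨0, fun h => absurd h hj⟩
  choose θ hθ using hex
  refine ⟨S, θ, Finset.filter_subset _ _, ?_, fun j hj => ⟨(hθ j hj).1, ?_, ?_⟩⟩
  · have hcov : A ⊆ ⋃ j ∈ S, c j := by
      intro x hx
      have hx01 := hA hx
      have h0 : 0 ≤ M * x := mul_nonneg hM'.le hx01.1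
      have hxc : x ∈ c ⌊M * x⌋₊ := by
        constructor
        · rw [div_le_iff₀ hM']; exact (Nat.floor_le h0).trans_eq (mul_comm _ _)
        · rw [lt_div_iff₀ hM', mul_comm]; exact Nat.lt_floor_add_one _
      refine Set.mem_iUnion₂.2 ⟨⌊M * x⌋₊, Finset.mem_filter.2 ⟨?_, x, hx, hxc⟩, hxc⟩
      rw [Finset.mem_range, Nat.floor_lt h0]
      nlinarith [hx01.2]
    have h1 : volume A ≤ S.card * ENNReal.ofReal (1 / M) := by
      calc volume A ≤ ∑ j ∈ S, volume (c j) :=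
            (measure_mono hcov).trans (measure_biUnion_finset_le _ _)
        _ = ∑ j ∈ S, ENNReal.ofReal (1 / M) := by
            refine Finset.sum_congr rfl fun j _ => ?_
            simp only [c, Real.volume_Ico]
            congr 1; ring
        _ = _ := by simp
    have h2 := hvol.trans h1
    rw [← ENNReal.ofReal_natCast, ← ENNReal.ofReal_mul (by positivity),
      ENNReal.ofReal_le_ofReal_iff (by positivity)] at h2
    have h3 : (S.card : ℝ) * (1 / M) * M = S.card := by field_simp
    nlinarith
  · have := (hθ j hj).2.1
    rwa [div_le_iff₀ hM', mul_comm] at this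
  · have := (hθ j hj).2.2
    rwa [lt_div_iff₀ hM', mul_comm] at this

/-! ### The dimension bound -/

/-- Only the directions in the plane spanned by the orthonormal pair `u`, `v` matter, and the
ambient inner product space is arbitrary. -/
lemma two_le_dimH_of_orthonormal_pair {E : Type*} [NormedAddCommGroup E] [InnerProductSpace ℝ E]
    {u v : E} (hu : ‖u‖ = 1) (hv : ‖v‖ = 1) (huv : inner ℝ u v = 0) {B : Set E}
    (hB : ∀ e : E, ‖e‖ = 1 → ∃ b : E, ∀ t ∈ Set.Icc (0 : ℝ) 1, b + t • e ∈ B) :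
    2 ≤ dimH B := by
  borelize E
  by_contra! hlt
  obtain ⟨s, hs1, hs2⟩ := ENNReal.lt_iff_exists_nnreal_btwn.1
    (max_lt hlt (by norm_num : (1 : ℝ≥0∞) < 2))
  have hdim : dimH B < s := (le_max_left _ _).trans_lt hs1
  have hs1' : (1 : ℝ) < s := by exact_mod_cast (le_max_right _ _).trans_lt hs1
  have hs2' : (s : ℝ) < 2 := by exact_mod_cast hs2
  have hH0 := hausdorffMeasure_of_dimH_lt hdim
  obtain ⟨p, hp⟩ : ∃ p : ℝ, (s : ℝ) = 1 + p := ⟨s - 1, by ring⟩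
  have hp0 : 0 < p := by linarith
  have hp1 : p < 1 := by linarith
  rw [hp] at hH0
  obtain ⟨C, hC, hCle⟩ := exists_lintegral_affine_absPow_le hp0 hp1
  -- `w φ` is `e φ` turned by a right angle, so `⟪w φ, e θ⟫ = sin (θ - φ)`
  set e : ℝ → E := fun θ => Real.cos θ • u + Real.sin θ • v with he
  set w : ℝ → E := fun θ => (-Real.sin θ) • u + Real.cos θ • v with hw
  have huu : inner ℝ u u = (1 : ℝ) := by rw [real_inner_self_eq_norm_sq, hu]; norm_num
  have hvv : inner ℝ v v = (1 : ℝ) := by rw [real_inner_self_eq_norm_sq, hv]; norm_num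
  have hvu : inner ℝ v u = (0 : ℝ) := by rw [real_inner_comm, huv]
  have norm_comb : ∀ x y : ℝ, x ^ 2 + y ^ 2 = 1 → ‖x • u + y • v‖ = 1 := by
    intro x y hxy
    have : ‖x • u + y • v‖ ^ 2 = 1 := by
      rw [← real_inner_self_eq_norm_sq]
      simp only [inner_add_left, inner_add_right, inner_smul_left, inner_smul_right, huu, hvv,
        huv, hvu]
      simp; linarith
    exact (pow_eq_one_iff_of_nonneg (norm_nonneg _) two_ne_zero).1 this
  have hen : ∀ θ, ‖e θ‖ = 1 := fun θ => norm_comb _ _ (by simp)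
  have hwn : ∀ θ, ‖w θ‖ = 1 := fun θ => norm_comb _ _ (by simp)
  have hwe : ∀ φ θ, inner ℝ (w φ) (e θ) = Real.sin (θ - φ) := by
    intro φ θ
    simp only [he, hw, inner_add_left, inner_add_right, inner_smul_left, inner_smul_right, huu, hvv,
        huv, hvu, Real.sin_sub]
    simp; ring
  choose b hb using fun θ => hB (e θ) (hen θ)
  -- `C₁ * M` bounds the sum of the far energies of one sampled segment
  set C₁ : ℝ := C.toReal * 6 ^ p / (1 - p) with hC₁
  have h1p : 0 < 1 - p := by linarith
  have hC₁0 : 0 ≤ C₁ := by positivity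
  obtain ⟨V, d, hVo, hd0, hVd, hBV, hsum⟩ :=
    exists_open_cover (by linarith) hH0 (ε := 1 / (16 * (C₁ + 1))) (by positivity)
  -- the angles whose segment is covered by `V 0, …, V n`
  set A : ℕ → Set ℝ := fun n =>
    {θ | θ ∈ Set.Ico (0 : ℝ) 1 ∧ ∀ t ∈ Set.Icc (0 : ℝ) 1, b θ + t • e θ ∈ partialSups V n} with hA
  have hAmono : Monotone A := fun m n hmn θ hθ =>
    ⟨hθ.1, fun t ht => (partialSups V).monotone hmn (hθ.2 t ht)⟩
  have hAun : ⋃ n, A n = Set.Ico (0 : ℝ) 1 := by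
    refine Set.Subset.antisymm (Set.iUnion_subset fun n θ hθ => hθ.1) fun θ hθ => ?_
    have hK : IsCompact ((fun t : ℝ => b θ + t • e θ) '' Set.Icc (0 : ℝ) 1) :=
      isCompact_Icc.image (by fun_prop)
    obtain ⟨n, hn⟩ := hK.elim_directed_cover (fun n => (partialSups V n : Set E))
      (fun n => by
        rw [partialSups_eq_biSup]
        exact isOpen_biUnion fun i _ => hVo i)
      (by
        rintro _ ⟨t, ht, rfl⟩
        obtain ⟨i, hi⟩ := Set.mem_iUnion.1 (hBV (hb θ t ht))
        exact Set.mem_iUnion.2 ⟨i, le_partialSups V i hi⟩)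
      (partialSups V).monotone.directed_le
    exact Set.mem_iUnion.2 ⟨n, hθ, fun t ht => hn ⟨t, ht, rfl⟩⟩
  obtain ⟨n, hn⟩ : ∃ n, ENNReal.ofReal (1 / 2) < volume (A n) := by
    have h1 : ⨆ n, volume (A n) = 1 := by
      rw [← hAmono.measure_iUnion, hAun]; simp
    refine lt_iSup_iff.1 ?_
    rw [h1, ← ENNReal.ofReal_one]
    exact (ENNReal.ofReal_lt_ofReal_iff one_pos).2 (by norm_num)
  set U := disjointed V
  have hUm : ∀ i, MeasurableSet (U i) := fun i =>
    MeasurableSet.disjointed (fun i => (hVo i).measurableSet) i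
  have hUdis : Pairwise (Function.onFun Disjoint U) := disjoint_disjointed V
  have hUd : ∀ i, ∀ x ∈ U i, ∀ y ∈ U i, dist x y ≤ d i := fun i x hx y hy =>
    hVd i x (disjointed_subset V i hx) y (disjointed_subset V i hy)
  set I := Finset.range (n + 1)
  obtain ⟨δ, hδ0, hδ⟩ : ∃ δ > 0, ∀ i ∈ I, δ ≤ d i := by
    obtain ⟨i, -, hi⟩ := Finset.exists_min_image I d ⟨0, by simp [I]⟩
    exact ⟨d i, hd0 i, hi⟩
  -- `D` bounds the near energies
  set D : ℝ := δ ^ (-p)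
  have hD0 : 0 ≤ D := by positivity
  obtain ⟨M, hM⟩ := exists_nat_gt (32 * D)
  have hM0 : (0 : ℝ) < M := by linarith
  obtain ⟨S, θ, hSM, hScard, hSθ⟩ := exists_sample (fun x hx => hx.1) hn.le
    (by exact_mod_cast hM0 : 0 < M)
  set g : ℕ → ℕ → ℝ := fun j i => (volume (hitTimes (b (θ j)) (e (θ j)) (U i))).toReal
  -- for indices at distance `m ≥ 2` the angles are at least `(m - 1) / M ≥ (m + 1) / (3 * M)` apart,
  -- hence `|sin (θ j - θ k)| ≥ (m + 1) / (6 * M)`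
  set h : ℕ → ℝ := fun m =>
    (if m ≤ 1 then D else 0) + C.toReal * (6 * M) ^ p * ((m : ℝ) + 1) ^ (-p)
  have hh0 : ∀ m, 0 ≤ h m := fun m => by
    have : 0 ≤ if m ≤ 1 then D else 0 := by split_ifs <;> simp [hD0]
    positivity
  have hg1 : ∀ j ∈ S, ∑ i ∈ I, g j i = 1 := by
    intro j hj
    simp only [g]
    rw [← ENNReal.toReal_sum fun i _ => volume_hitTimes_ne_top _ _ _,
      sum_volume_hitTimes _ _ hUm hUdis, biUnion_range_succ_disjointed]
    have : hitTimes (b (θ j)) (e (θ j)) (partialSups V n) = Set.Icc 0 1 :=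
      Set.Subset.antisymm (hitTimes_subset _ _ _) fun t ht => ⟨ht, (hSθ j hj).1.2 t ht⟩
    rw [this]; simp
  have hconv : ∀ j k, ENNReal.ofReal (∑ i ∈ I, g j i * g k i * d i ^ (-(1 + p)))
      = ∑ i ∈ I, volume (hitTimes (b (θ j)) (e (θ j)) (U i))
        * volume (hitTimes (b (θ k)) (e (θ k)) (U i)) * ENNReal.ofReal (d i) ^ (-(1 + p)) := by
    intro j k
    have hdp : ∀ i, 0 ≤ d i ^ (-(1 + p)) := fun i => (Real.rpow_pos_of_pos (hd0 i) _).le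
    rw [ENNReal.ofReal_sum_of_nonneg fun i _ =>
      mul_nonneg (mul_nonneg ENNReal.toReal_nonneg ENNReal.toReal_nonneg) (hdp i)]
    refine Finset.sum_congr rfl fun i _ => ?_
    rw [ENNReal.ofReal_mul (by positivity), ENNReal.ofReal_mul (by positivity),
      ENNReal.ofReal_rpow_of_pos (hd0 i), ENNReal.ofReal_toReal (volume_hitTimes_ne_top _ _ _),
      ENNReal.ofReal_toReal (volume_hitTimes_ne_top _ _ _)]
  have hK : ∀ j ∈ S, ∀ k ∈ S,
      ∑ i ∈ I, g j i * g k i * d i ^ (-(1 + p)) ≤ h (Nat.dist j k) := by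
    intro j hj k hk
    refine (ENNReal.ofReal_le_ofReal_iff (hh0 _)).1 ?_
    rw [hconv]
    by_cases hjk : Nat.dist j k ≤ 1
    · refine (pair_energy_near (hen _) hUm hUdis hd0 hUd hp0 I hδ).trans ?_
      rw [ENNReal.ofReal_rpow_of_pos hδ0]
      refine ENNReal.ofReal_le_ofReal ?_
      simp only [h, if_pos hjk]
      have : 0 ≤ C.toReal * (6 * M) ^ p * ((Nat.dist j k : ℝ) + 1) ^ (-p) := by positivity
      linarith
    · refine (pair_energy_far (hen _) (hwn (θ k)) (by rw [hwe]; simp) hUm hUdis hd0 hUd hp0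
        I).trans ((hCle _ _).trans ?_)
      rw [hwe]
      have hd2 : ((Nat.dist j k : ℝ) + 1) / (6 * M) ≤ |Real.sin (θ j - θ k)| := by
        obtain ⟨⟨hj0, -⟩, hj1, hj2⟩ := hSθ j hj
        obtain ⟨⟨hk0, -⟩, hk1, hk2⟩ := hSθ k hk
        have habs : |θ j - θ k| ≤ 1 := by
          rw [abs_le]; constructor <;> linarith [hj0.1, hj0.2, hk0.1, hk0.2]
        have hdist : (Nat.dist j k : ℝ) - 1 ≤ M * |θ j - θ k| := by
          rcases le_total j k with hle | hle
          · rw [Nat.dist_eq_sub_of_le hle, Nat.cast_sub hle]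
            have := mul_le_mul_of_nonneg_left (neg_abs_le (θ j - θ k)) hM0.le
            nlinarith
          · rw [Nat.dist_comm, Nat.dist_eq_sub_of_le hle, Nat.cast_sub hle]
            have := mul_le_mul_of_nonneg_left (le_abs_self (θ j - θ k)) hM0.le
            nlinarith
        have hd3 : (2 : ℝ) ≤ Nat.dist j k := by exact_mod_cast (by omega : 2 ≤ Nat.dist j k)
        have hsin := Real.mul_abs_le_abs_sin (x := θ j - θ k)
          (habs.trans (by linarith [Real.pi_gt_three]))
        have hpi : 1 / 2 ≤ 2 / Real.pi := by
          rw [div_le_div_iff₀ (by norm_num) Real.pi_pos]; linarith [Real.pi_le_four]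
        have hsin2 : 1 / 2 * |θ j - θ k| ≤ |Real.sin (θ j - θ k)| :=
          (mul_le_mul_of_nonneg_right hpi (abs_nonneg _)).trans hsin
        rw [div_le_iff₀ (by positivity)]
        nlinarith
      have hq0 : 0 < ((Nat.dist j k : ℝ) + 1) / (6 * M) := by positivity
      calc C * ENNReal.ofReal |Real.sin (θ j - θ k)| ^ (-p)
          ≤ C * ENNReal.ofReal (((Nat.dist j k : ℝ) + 1) / (6 * M)) ^ (-p) := by
            rw [ENNReal.rpow_neg, ENNReal.rpow_neg]
            gcongr
        _ = ENNReal.ofReal (C.toReal * (6 * M) ^ p * ((Nat.dist j k : ℝ) + 1) ^ (-p)) := by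
            rw [ENNReal.ofReal_rpow_of_pos hq0, mul_assoc, ENNReal.ofReal_mul (by positivity),
              ENNReal.ofReal_toReal hC, Real.div_rpow (by positivity) (by positivity),
              Real.rpow_neg (x := 6 * (M : ℝ)) (by positivity), div_inv_eq_mul, mul_comm (_ ^ (-p))]
        _ ≤ _ := by
            refine ENNReal.ofReal_le_ofReal ?_
            simp only [h, if_neg hjk]
            linarith
  have main := sum_sq_le_of_pair_energy_le M S hSM hScard I g d hd0 (1 + p) hg1 h hh0 hK
  have hhsum : ∑ m ∈ Finset.range M, h m ≤ 2 * D + C₁ * M := by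
    simp only [h]
    rw [Finset.sum_add_distrib, ← Finset.mul_sum]
    have h1 : ∑ m ∈ Finset.range M, (if m ≤ 1 then D else 0) ≤ 2 * D := by
      rw [← Finset.sum_filter, Finset.sum_const, nsmul_eq_mul]
      gcongr
      have : ((Finset.range M).filter (· ≤ 1)) ⊆ Finset.range 2 := by
        intro x hx
        simp at hx ⊢
        omega
      exact_mod_cast (Finset.card_le_card this).trans (by simp)
    have h2 : C.toReal * (6 * M) ^ p * ∑ m ∈ Finset.range M, ((m : ℝ) + 1) ^ (-p) ≤ C₁ * M := by
      calc _ ≤ C.toReal * (6 * M) ^ p * ((M : ℝ) ^ (1 - p) / (1 - p)) := by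
            gcongr; exact sum_range_rpow_neg_le hp0 hp1 M
        _ = C.toReal * 6 ^ p / (1 - p) * ((M : ℝ) ^ p * (M : ℝ) ^ (1 - p)) := by
            rw [Real.mul_rpow (by norm_num) hM0.le]; ring
        _ = C₁ * M := by rw [← Real.rpow_add hM0]; simp [hC₁]
    linarith
  have hA' : (∑ i ∈ I, d i ^ (1 + p)) * (16 * (C₁ + 1)) ≤ 1 := by
    have := hsum I
    rwa [le_div_iff₀ (by positivity)] at this
  set a := ∑ i ∈ I, d i ^ (1 + p)
  have ha0 : 0 ≤ a := Finset.sum_nonneg fun i _ => (Real.rpow_pos_of_pos (hd0 i) _).le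
  have hfin : ((M : ℝ) / 2) ^ 2 ≤ a * (M * (2 * (2 * D + C₁ * M))) :=
    main.trans (by gcongr)
  -- since `32 * D < M`, the right side is at most `2 * a * (C₁ + 1) * M ^ 2 ≤ M ^ 2 / 8`
  have h3 : a * (M * (2 * (2 * D + C₁ * M))) ≤ a * (M * (2 * ((C₁ + 1) * M))) := by
    gcongr
    linarith
  have h4 : a * (M * (2 * ((C₁ + 1) * M))) = a * (16 * (C₁ + 1)) * (M ^ 2 / 8) := by ring
  have h5 : a * (16 * (C₁ + 1)) * ((M : ℝ) ^ 2 / 8) ≤ 1 * (M ^ 2 / 8) := by gcongr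
  have h6 : 0 < (M : ℝ) ^ 2 := by positivity
  nlinarith

/-- Davies: every set `B ⊆ ℝⁿ` containing a unit line segment in every
direction has Hausdorff dimension at least `2`. -/
theorem davies_kakeya_dim_ge_two (n : ℕ) (hn : 2 ≤ n)
    (B : Set (EuclideanSpace ℝ (Fin n)))
    (hB : ∀ e ∈ sphere (0 : EuclideanSpace ℝ (Fin n)) 1,
      ∃ b : EuclideanSpace ℝ (Fin n), ∀ t ∈ Set.Icc (0 : ℝ) 1, b + t • e ∈ B) :
    2 ≤ dimH B := by
  have h01 : (⟨0, by omega⟩ : Fin n) ≠ ⟨1, by omega⟩ := by simp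
  exact two_le_dimH_of_orthonormal_pair (u := EuclideanSpace.single ⟨0, by omega⟩ 1)
    (v := EuclideanSpace.single ⟨1, by omega⟩ 1) (by simp) (by simp)
    (by rw [EuclideanSpace.inner_single_left]; simp [h01])
    fun e he => hB e (by simpa using he)
end

section
/- Let I be a set, and for each i ∈ I let a_i ∈ ℝ², let e_i ∈ ℝ² be a unit vector, and let c_i < d_i be real numbers. Let A = ⋃_{i ∈ I} {a_i + t·e_i : t ∈ [c_i, d_i]} be the union of the line segments and B = ⋃_{i ∈ I} {a_i + t·e_i : t ∈ ℝ} the union of the corresponding full lines. Then dim A = dim B. -/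
open MeasureTheory
open scoped ENNReal

/-!
Countable stability of `dimH`, together with affine changes of coordinates, reduces the statement to
non-vertical lines `y = m x + b` whose parameters `p = (m, b)` range over a set `E ⊆ [0,1)²` and
which are contained in `A` over `x ∈ [0,1)`. No measurability of `E` is available, so instead of
projection theorems for measures the proof works at finite scales and uses only outer measures.

Let `1 ≤ dim A < d < σ < 2` and `s = σ - 1`. Cover `A` by sets of dyadic size `2^-κ` with
`∑ 2^(-κ d)` small (`exists_dyadic_cover`). Since the cover catches the whole unit interval on each
line, every line of `E` has some scale `k` at which the pieces of size `2^-k` meet it in at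
least `λ_k 2^k` of the `2^k` dyadic columns, for a fixed summable sequence `λ` (`exists_rich_scale`).
Write `E_k` for the set of parameters of these lines, and `N_k` for the number of pieces of
size `2^-k`.

To bound the `s`-dimensional content of `E_k`, choose one parameter in each dyadic square of
side `2^-k` that meets `E_k`. A finite Frostman lemma (`exists_weight_cover`) gives weights on these
parameters such that each dyadic square of side `2^-j`, `j ≤ k`, has mass at most `2^(-j s)`,
while the total mass `W` equals `∑ 2^(-j s)` over a family of dyadic squares covering `E_k`. Two lines
whose parameters are at distance `r` share a square in at most `5 / r` columns
(`card_common_row_mul_dist_le`), so as `s ≤ 1` the weighted count of coincidences with a given line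
is `≲ (k + 1) 2^(k (1 - s))` (`energy_le`). By Cauchy-Schwarz (`mass_sq_le`),
`(λ_k 2^k W)² ≲ N_k W (k + 1) 2^(k (1 - s))`, that is, `W ≲ λ_k⁻² (k + 1) 2^(-k σ) N_k`. This
is `≲ 2^(-k d) N_k` when `λ_k` decays slowly enough (`exists_threshold`). Summing over `k` shows that
`E` is covered by dyadic squares with arbitrarily small `∑ 2^(-j s)` (`exists_cell_cover`).

Finally, over a bounded range of `x`, the lines with parameters in a square of side `2^-j` are covered
by `≲ 2^j` sets of diameter `≲ 2^-j`, so the union of the lines has zero `σ`-dimensional Hausdorff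
measure (`hausdorffMeasure_lines_eq_zero`).
-/

/-! ### A finite Frostman lemma -/

/-- Weights on a finite set, with a capacity `c j` on each cell of level `j ≤ K`, can be chosen so that
every point lies in a saturated cell: points are added one at a time, each receiving the
largest weight that the capacities still allow. -/
theorem exists_greedy_weight {α β : Type*} [DecidableEq α] [DecidableEq β] (P : Finset α) (K : ℕ)
    (cell : ℕ → α → β) (c : ℕ → ℝ) (hc : ∀ j, 0 ≤ c j) :
    ∃ w : α → ℝ, (∀ x, 0 ≤ w x) ∧
      (∀ j ≤ K, ∀ q, ∑ x ∈ P with cell j x = q, w x ≤ c j) ∧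
      ∀ x ∈ P, ∃ j ≤ K, ∑ y ∈ P with cell j y = cell j x, w y = c j := by
  induction P using Finset.induction_on with
  | empty => exact ⟨0, by simp, by simpa using fun j _ _ => hc j, by simp⟩
  | insert x₀ P hx₀ ih =>
    obtain ⟨w, hw0, hwc, hwt⟩ := ih
    obtain ⟨j₀, hj₀, hmin⟩ := Finset.exists_min_image (Finset.range (K + 1))
      (fun j => c j - ∑ y ∈ P with cell j y = cell j x₀, w y) ⟨0, by simp⟩
    simp only [Finset.mem_range, Nat.lt_succ_iff] at hj₀ hmin
    set s := c j₀ - ∑ y ∈ P with cell j₀ y = cell j₀ x₀, w y with hs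
    have hs0 : 0 ≤ s := sub_nonneg.2 (hwc j₀ hj₀ _)
    have key : ∀ j q, ∑ x ∈ insert x₀ P with cell j x = q, Function.update w x₀ s x =
        (if cell j x₀ = q then s else 0) + ∑ x ∈ P with cell j x = q, w x := by
      intro j q
      have h1 : ∑ x ∈ P with cell j x = q, Function.update w x₀ s x =
          ∑ x ∈ P with cell j x = q, w x := by
        refine Finset.sum_congr rfl fun x hx => ?_
        rw [Function.update_of_ne]
        rintro rfl
        exact hx₀ (Finset.mem_filter.1 hx).1
      rw [Finset.filter_insert]
      split_ifs with h
      · rw [Finset.sum_insert (by simp [hx₀]), h1, Function.update_self]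
      · rw [h1, zero_add]
    have hle : ∀ j ≤ K, ∀ q, ∑ x ∈ insert x₀ P with cell j x = q, Function.update w x₀ s x ≤ c j := by
      intro j hj q
      rw [key]
      split_ifs with h
      · have := hmin j hj
        rw [h] at this
        linarith
      · linarith [hwc j hj q]
    refine ⟨Function.update w x₀ s, ?_, hle, ?_⟩
    · intro x
      by_cases h : x = x₀
      · subst h; simpa using hs0
      · simpa [h] using hw0 x
    · intro x hx
      rcases Finset.mem_insert.1 hx with rfl | hx
      · refine ⟨j₀, hj₀, ?_⟩
        rw [key, if_pos rfl, hs]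
        ring
      · obtain ⟨j, hj, h⟩ := hwt x hx
        refine ⟨j, hj, le_antisymm (hle j hj _) ?_⟩
        rw [key, h]
        split_ifs <;> linarith

/-- Finite Frostman lemma for nested cells. The minimal-level saturated cells of `exists_greedy_weight`
are pairwise disjoint, so the capacities of these covering cells add up to the total weight. -/
theorem exists_weight_cover {α β : Type*} [DecidableEq α] [DecidableEq β] (P : Finset α) (K : ℕ)
    (cell : ℕ → α → β) (hcell : ∀ i j x y, i ≤ j → cell j x = cell j y → cell i x = cell i y)
    (c : ℕ → ℝ) (hc : ∀ j, 0 ≤ c j) :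
    ∃ w : α → ℝ, (∀ x, 0 ≤ w x) ∧
      (∀ j ≤ K, ∀ q, ∑ x ∈ P with cell j x = q, w x ≤ c j) ∧
      ∃ Q : Finset (ℕ × β), (∀ x ∈ P, ∃ j ≤ K, (j, cell j x) ∈ Q) ∧
        ∑ z ∈ Q, c z.1 = ∑ x ∈ P, w x := by
  obtain ⟨w, hw0, hwc, hwt⟩ := exists_greedy_weight P K cell c hc
  refine ⟨w, hw0, hwc, ?_⟩
  classical
  have hex : ∀ x, ∃ j, x ∈ P → j ≤ K ∧ (∑ y ∈ P with cell j y = cell j x, w y = c j) ∧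
      ∀ i < j, ¬ (∑ y ∈ P with cell i y = cell i x, w y = c i) := by
    intro x
    by_cases hx : x ∈ P
    · have h := hwt x hx
      have h' : ∃ j, ∑ y ∈ P with cell j y = cell j x, w y = c j := ⟨_, h.choose_spec.2⟩
      refine ⟨Nat.find h', fun _ => ⟨?_, Nat.find_spec h', fun i hi => Nat.find_min h' hi⟩⟩
      exact (Nat.find_min' h' h.choose_spec.2).trans h.choose_spec.1
    · exact ⟨0, fun h => absurd h hx⟩
  -- `J x` is the lowest level of a saturated cell containing `x`
  choose J hJ using hex
  have hJle : ∀ x ∈ P, ∀ y ∈ P, cell (J x) y = cell (J x) x → J y ≤ J x := by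
    intro x hx y hy h
    by_contra! hlt
    apply (hJ y hy).2.2 _ hlt
    rw [h]
    exact (hJ x hx).2.1
  have hJeq : ∀ x ∈ P, ∀ y ∈ P, cell (J x) y = cell (J x) x → J y = J x := by
    intro x hx y hy h
    have h1 := hJle x hx y hy h
    exact le_antisymm h1 (hJle y hy x hx (hcell _ _ _ _ h1 h.symm))
  refine ⟨P.image fun x => (J x, cell (J x) x), ?_, ?_⟩
  · intro x hx
    exact ⟨J x, (hJ x hx).1, Finset.mem_image_of_mem _ hx⟩
  · rw [← Finset.sum_fiberwise_of_maps_to (s := P) (g := fun x => (J x, cell (J x) x))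
      (fun x hx => Finset.mem_image_of_mem _ hx)]
    refine Finset.sum_congr rfl fun z hz => ?_
    obtain ⟨x, hx, rfl⟩ := Finset.mem_image.1 hz
    rw [← (hJ x hx).2.1]
    refine Finset.sum_congr ?_ fun _ _ => rfl
    ext y
    simp only [Finset.mem_filter, Prod.mk.injEq, and_congr_right_iff]
    intro hy
    constructor
    · intro h
      have := hJeq x hx y hy h
      exact ⟨this, by rw [this]; exact h⟩
    · rintro ⟨h1, h2⟩
      rw [h1] at h2
      exact h2

/-! ### Dyadic squares and coincidences of two lines -/

/-- The index of the half-open dyadic square of side `2^-k` containing `p`. -/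
noncomputable def cell (k : ℕ) (p : ℝ × ℝ) : ℤ × ℤ := (⌊2 ^ k * p.1⌋, ⌊2 ^ k * p.2⌋)

/-- The index of the row, at scale `2^-k`, of the point of the line `y = p.1 x + p.2` at the left end
`x = j 2^-k` of the `j`-th dyadic column. -/
noncomputable def row (k j : ℕ) (p : ℝ × ℝ) : ℤ := ⌊p.1 * j + 2 ^ k * p.2⌋

theorem floor_two_pow_congr {i j : ℕ} (hij : i ≤ j) {x y : ℝ} (h : ⌊2 ^ j * x⌋ = ⌊2 ^ j * y⌋) :
    ⌊2 ^ i * x⌋ = ⌊2 ^ i * y⌋ := by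
  obtain ⟨n, rfl⟩ := Nat.exists_eq_add_of_le hij
  have key : ∀ x : ℝ, ⌊2 ^ i * x⌋ = ⌊2 ^ (i + n) * x⌋ / ((2 ^ n : ℕ) : ℤ) := by
    intro x
    rw [← Int.floor_div_natCast]
    congr 1
    push_cast
    rw [pow_add]
    field_simp
  rw [key, key, h]

theorem cell_congr (i j : ℕ) (x y : ℝ × ℝ) (hij : i ≤ j) (h : cell j x = cell j y) :
    cell i x = cell i y := by
  simp only [cell, Prod.mk.injEq] at h ⊢
  exact ⟨floor_two_pow_congr hij h.1, floor_two_pow_congr hij h.2⟩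

theorem card_abs_lt_one_le (S : Finset ℕ) {α β : ℝ} (hα : α ≠ 0)
    (hS : ∀ j ∈ S, |α * j + β| < 1) : (S.card : ℝ) ≤ 2 / |α| + 1 := by
  rcases S.eq_empty_or_nonempty with rfl | hne
  · simp; positivity
  have h1 : S ⊆ Finset.Icc (S.min' hne) (S.max' hne) := fun x hx =>
    Finset.mem_Icc.2 ⟨S.min'_le x hx, S.le_max' x hx⟩
  have h2 := Finset.card_le_card h1
  have h3 : S.min' hne ≤ S.max' hne := S.min'_le _ (S.max'_mem hne)
  rw [Nat.card_Icc] at h2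
  have h4 : (S.card : ℝ) ≤ (S.max' hne : ℝ) - S.min' hne + 1 := by
    have : S.card + S.min' hne ≤ S.max' hne + 1 := by omega
    have : (S.card : ℝ) + S.min' hne ≤ S.max' hne + 1 := by exact_mod_cast this
    linarith
  have h5 := hS _ (S.min'_mem hne)
  have h6 := hS _ (S.max'_mem hne)
  have h7 : |α| * ((S.max' hne : ℝ) - S.min' hne) < 2 := by
    have h3' : (S.min' hne : ℝ) ≤ S.max' hne := by exact_mod_cast h3
    rw [← abs_of_nonneg (sub_nonneg.2 h3'), ← abs_mul]
    rw [abs_lt] at h5 h6 ⊢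
    constructor <;> linarith
  have : (S.max' hne : ℝ) - S.min' hne ≤ 2 / |α| := by
    rw [le_div_iff₀ (abs_pos.2 hα)]
    linarith
  linarith

/-- Two lines with parameters at distance `r` are in the same row in at most `5 / r` columns. A common
row in column `j` means `|(p.1 - q.1) j + 2^k (p.2 - q.2)| < 1`; either the slopes differ by at
least `r / 2`, which confines `j` to a short interval, or the intercepts differ so much more than the
slopes that a common row forces `2^k r < 2`. -/
theorem card_common_row_mul_dist_le (k : ℕ) (p q : ℝ × ℝ) (hpq : dist p q ≤ 1) :
    (((Finset.range (2 ^ k)).filter fun j => row k j p = row k j q).card : ℝ) * dist p q ≤ 5 := by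
  set S := (Finset.range (2 ^ k)).filter fun j => row k j p = row k j q with hSdef
  have hcard : (S.card : ℝ) ≤ 2 ^ k := by
    have := Finset.card_filter_le (Finset.range (2 ^ k)) fun j => row k j p = row k j q
    rw [Finset.card_range] at this
    exact_mod_cast this
  have hS : ∀ j ∈ S, |(p.1 - q.1) * j + 2 ^ k * (p.2 - q.2)| < 1 := by
    intro j hj
    rw [show (p.1 - q.1) * j + 2 ^ k * (p.2 - q.2) =
      (p.1 * j + 2 ^ k * p.2) - (q.1 * j + 2 ^ k * q.2) by ring]
    exact Int.abs_sub_lt_one_of_floor_eq_floor (Finset.mem_filter.1 hj).2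
  have hd : dist p q = max |p.1 - q.1| |p.2 - q.2| := by
    rw [Prod.dist_eq, Real.dist_eq, Real.dist_eq]
  set d := dist p q
  have hd0 : 0 ≤ d := dist_nonneg
  rcases hd0.eq_or_lt with h0 | hpos
  · rw [← h0]; norm_num
  rcases le_or_gt (d / 2) |p.1 - q.1| with h | h
  · have hα : 0 < |p.1 - q.1| := by linarith
    have h1 := card_abs_lt_one_le S (abs_pos.1 hα) hS
    have h2 : 2 / |p.1 - q.1| ≤ 4 / d := by
      rw [div_le_div_iff₀ hα hpos]; linarith
    calc (S.card : ℝ) * d ≤ (4 / d + 1) * d := by gcongr; linarith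
      _ = 4 + d := by field_simp
      _ ≤ 5 := by linarith
  · have hb : |p.2 - q.2| = d := by
      rcases max_choice |p.1 - q.1| |p.2 - q.2| with h' | h' <;> rw [h'] at hd <;> linarith
    rcases S.eq_empty_or_nonempty with he | ⟨j, hj⟩
    · rw [he]; simp
    have hjk : (j : ℝ) ≤ 2 ^ k := by
      have := (Finset.mem_range.1 (Finset.mem_filter.1 hj).1).le
      exact_mod_cast this
    have h1 := hS j hj
    have h2 : |2 ^ k * (p.2 - q.2)| - |(p.1 - q.1) * j| ≤
        |(p.1 - q.1) * j + 2 ^ k * (p.2 - q.2)| := by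
      have := abs_sub_abs_le_abs_sub (2 ^ k * (p.2 - q.2)) (-((p.1 - q.1) * j))
      rwa [abs_neg, sub_neg_eq_add, add_comm (2 ^ k * (p.2 - q.2))] at this
    rw [abs_mul, abs_mul, hb, abs_of_pos (by positivity : (0:ℝ) < 2 ^ k), Nat.abs_cast] at h2
    have h3 : |p.1 - q.1| * j ≤ d / 2 * 2 ^ k := by gcongr
    have : (S.card : ℝ) * d ≤ 2 ^ k * d := by gcongr
    linarith

/-- Dyadic form of `card_common_row_mul_dist_le`: the term of the largest `i ≤ k` with
`dist p q ≤ 2^-i` alone dominates the count. -/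
theorem card_common_row_le (k : ℕ) (p q : ℝ × ℝ) (hpq : dist p q ≤ 1) :
    (((Finset.range (2 ^ k)).filter fun j => row k j p = row k j q).card : ℝ) ≤
      10 * ∑ i ∈ Finset.range (k + 1), if dist p q * 2 ^ i ≤ 1 then (2 : ℝ) ^ i else 0 := by
  have hd := card_common_row_mul_dist_le k p q hpq
  have hcard : (((Finset.range (2 ^ k)).filter fun j => row k j p = row k j q).card : ℝ) ≤
      2 ^ k := by
    have := Finset.card_filter_le (Finset.range (2 ^ k)) fun j => row k j p = row k j q
    rw [Finset.card_range] at this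
    exact_mod_cast this
  set N : ℝ := (((Finset.range (2 ^ k)).filter fun j => row k j p = row k j q).card : ℝ)
  have hN : 0 ≤ N := Nat.cast_nonneg _
  have hex : ∃ i ≤ k, dist p q * 2 ^ i ≤ 1 ∧ N ≤ 10 * 2 ^ i := by
    set i := Nat.findGreatest (fun i => dist p q * 2 ^ i ≤ 1) k with hi
    have h1 : dist p q * 2 ^ i ≤ 1 :=
      Nat.findGreatest_spec (P := fun i => dist p q * 2 ^ i ≤ 1) (Nat.zero_le k) (by simpa using hpq)
    have h2 : i ≤ k := Nat.findGreatest_le k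
    refine ⟨i, h2, h1, ?_⟩
    rcases h2.eq_or_lt with h | h
    · rw [h]; have : (0:ℝ) < 2 ^ k := by positivity
      linarith
    · have h3 := Nat.findGreatest_is_greatest (P := fun i => dist p q * 2 ^ i ≤ 1)
        (Nat.lt_succ_self i) h
      rw [not_le, Nat.succ_eq_add_one, pow_succ] at h3
      have : (0:ℝ) < 2 ^ i := by positivity
      nlinarith
  obtain ⟨i, hik, hi, hNi⟩ := hex
  refine hNi.trans ?_
  gcongr
  have := Finset.single_le_sum (s := Finset.range (k + 1))
    (f := fun i => if dist p q * 2 ^ i ≤ 1 then (2 : ℝ) ^ i else 0)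
    (fun i _ => by positivity) (Finset.mem_range.2 (Nat.lt_succ_of_le hik))
  simpa [hi] using this

theorem floor_mem_Icc_of_abs_sub_le {x y : ℝ} (h : |x - y| ≤ 1) :
    ⌊y⌋ ∈ Finset.Icc (⌊x⌋ - 1) (⌊x⌋ + 1) := by
  rw [abs_le] at h
  rw [Finset.mem_Icc]
  constructor
  · rw [Int.le_floor]
    push_cast
    linarith [Int.floor_le x]
  · rw [← Int.floor_add_one]
    exact Int.floor_mono (by linarith)

/-! ### The Cauchy-Schwarz estimate -/

theorem sum_near_le (P : Finset (ℝ × ℝ)) (w : ℝ × ℝ → ℝ) (hw : ∀ x, 0 ≤ w x) (i : ℕ) (c : ℝ)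
    (hc : ∀ q, ∑ x ∈ P with cell i x = q, w x ≤ c) (p : ℝ × ℝ) :
    ∑ q ∈ P with dist p q * 2 ^ i ≤ 1, w q ≤ 9 * c := by
  -- points within `2^-i` of `p` lie in the `3 × 3` block of cells around the cell of `p`
  set box := Finset.Icc (⌊2 ^ i * p.1⌋ - 1) (⌊2 ^ i * p.1⌋ + 1) ×ˢ
    Finset.Icc (⌊2 ^ i * p.2⌋ - 1) (⌊2 ^ i * p.2⌋ + 1) with hbox
  have hcard : box.card = 9 := by
    rw [hbox, Finset.card_product, Int.card_Icc, Int.card_Icc]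
    simp only [show ∀ n : ℤ, n + 1 + 1 - (n - 1) = 3 from fun n => by ring]
    rfl
  have hmaps : ∀ q ∈ P.filter (fun q => dist p q * 2 ^ i ≤ 1), cell i q ∈ box := by
    intro q hq
    have h := (Finset.mem_filter.1 hq).2
    rw [Prod.dist_eq, Real.dist_eq, Real.dist_eq] at h
    have h2 : (0 : ℝ) < 2 ^ i := by positivity
    refine Finset.mem_product.2 ⟨floor_mem_Icc_of_abs_sub_le ?_, floor_mem_Icc_of_abs_sub_le ?_⟩
    · rw [← mul_sub, abs_mul, abs_of_pos h2, mul_comm]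
      exact le_trans (by gcongr; exact le_max_left _ _) h
    · rw [← mul_sub, abs_mul, abs_of_pos h2, mul_comm]
      exact le_trans (by gcongr; exact le_max_right _ _) h
  rw [← Finset.sum_fiberwise_of_maps_to hmaps]
  calc _ ≤ ∑ z ∈ box, c := by
        refine Finset.sum_le_sum fun z _ => le_trans ?_ (hc z)
        refine Finset.sum_le_sum_of_subset_of_nonneg ?_ fun _ _ _ => hw _
        intro x hx
        simp only [Finset.mem_filter] at hx ⊢
        exact ⟨hx.1.1, hx.2⟩
    _ = 9 * c := by rw [Finset.sum_const, hcard, nsmul_eq_mul]; norm_num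

/-- The weighted number of coincidences with a fixed line. Here `a` stands for `2^-s`, and `1 ≤ 2 * a`
expresses `s ≤ 1`: this makes the finest scale the largest term in the sum over
dyadic distances. -/
theorem energy_le (k : ℕ) (P : Finset (ℝ × ℝ)) (w : ℝ × ℝ → ℝ) (hw : ∀ x, 0 ≤ w x) (a : ℝ)
    (ha : 1 ≤ 2 * a) (hc : ∀ j ≤ k, ∀ q, ∑ x ∈ P with cell j x = q, w x ≤ a ^ j)
    (p : ℝ × ℝ) (hp : ∀ q ∈ P, dist p q ≤ 1) :
    ∑ q ∈ P, w q * (((Finset.range (2 ^ k)).filter fun j => row k j p = row k j q).card : ℝ) ≤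
      90 * (k + 1) * (2 * a) ^ k := by
  calc _ ≤ ∑ q ∈ P, w q * (10 * ∑ i ∈ Finset.range (k + 1),
          if dist p q * 2 ^ i ≤ 1 then (2 : ℝ) ^ i else 0) := by
        refine Finset.sum_le_sum fun q hq => ?_
        exact mul_le_mul_of_nonneg_left (card_common_row_le k p q (hp q hq)) (hw q)
    _ = ∑ i ∈ Finset.range (k + 1), 10 * 2 ^ i * ∑ q ∈ P with dist p q * 2 ^ i ≤ 1, w q := by
        simp_rw [Finset.mul_sum, Finset.sum_filter]
        rw [Finset.sum_comm]
        refine Finset.sum_congr rfl fun i _ => ?_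
        refine Finset.sum_congr rfl fun q _ => ?_
        split_ifs <;> ring
    _ ≤ ∑ i ∈ Finset.range (k + 1), 90 * (2 * a) ^ k := by
        refine Finset.sum_le_sum fun i hi => ?_
        have hik : i ≤ k := Nat.lt_succ_iff.1 (Finset.mem_range.1 hi)
        calc _ ≤ 10 * 2 ^ i * (9 * a ^ i) := by
              gcongr
              exact sum_near_le P w hw i _ (hc i hik) p
          _ = 90 * (2 * a) ^ i := by rw [mul_pow]; ring
          _ ≤ 90 * (2 * a) ^ k := by gcongr
    _ = 90 * (k + 1) * (2 * a) ^ k := by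
        rw [Finset.sum_const, Finset.card_range, nsmul_eq_mul]
        push_cast
        ring

/-- If every line of `P` meets the squares of `H` in at least `L` columns, then the number of squares
bounds the mass from above: Cauchy-Schwarz over `H` applied to the mass of lines through a square. -/
theorem mass_sq_le (k : ℕ) (P : Finset (ℝ × ℝ)) (w : ℝ × ℝ → ℝ) (hw : ∀ x, 0 ≤ w x) (M L : ℝ)
    (hL : 0 ≤ L) (H : Finset (ℕ × ℤ))
    (hE : ∀ p ∈ P, ∑ q ∈ P,
      w q * (((Finset.range (2 ^ k)).filter fun j => row k j p = row k j q).card : ℝ) ≤ M)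
    (hH : ∀ p ∈ P, L ≤ (((Finset.range (2 ^ k)).filter fun j => (j, row k j p) ∈ H).card : ℝ)) :
    (L * ∑ p ∈ P, w p) ^ 2 ≤ H.card * ((∑ p ∈ P, w p) * M) := by
  set H' := H.filter fun h => h.1 < 2 ^ k with hH'
  have hsub : H' ⊆ H := Finset.filter_subset _ _
  have h1 : L * ∑ p ∈ P, w p ≤ ∑ h ∈ H', ∑ p ∈ P, if row k h.1 p = h.2 then w p else 0 := by
    rw [Finset.sum_comm, Finset.mul_sum]
    refine Finset.sum_le_sum fun p hp => ?_
    rw [← Finset.sum_filter, Finset.sum_const, nsmul_eq_mul]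
    refine mul_le_mul_of_nonneg_right ((hH p hp).trans ?_) (hw p)
    refine Nat.cast_le.2 (Finset.card_le_card_of_injOn (fun j => (j, row k j p)) ?_ ?_)
    · intro j hj
      simp only [Finset.coe_filter, Finset.mem_range, Set.mem_ofPred_eq, hH', Finset.mem_filter]
        at hj ⊢
      exact ⟨⟨hj.2, hj.1⟩, trivial⟩
    · intro i _ j _ h
      exact congrArg Prod.fst h
  have h2 : ∑ h ∈ H', (∑ p ∈ P, if row k h.1 p = h.2 then w p else 0) ^ 2 ≤
      (∑ p ∈ P, w p) * M := by
    calc _ = ∑ p ∈ P, w p * ∑ q ∈ P, w q *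
          ((H'.filter fun h => row k h.1 p = h.2 ∧ row k h.1 q = h.2).card : ℝ) := by
          simp_rw [sq, Finset.sum_mul_sum]
          rw [Finset.sum_comm]
          refine Finset.sum_congr rfl fun p _ => ?_
          rw [Finset.sum_comm, Finset.mul_sum]
          refine Finset.sum_congr rfl fun q _ => ?_
          rw [Finset.card_filter, Nat.cast_sum, Finset.mul_sum, Finset.mul_sum]
          refine Finset.sum_congr rfl fun h _ => ?_
          by_cases ha : row k h.1 p = h.2 <;> by_cases hb : row k h.1 q = h.2 <;> simp [ha, hb]
      _ ≤ ∑ p ∈ P, w p * M := by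
          refine Finset.sum_le_sum fun p hp => mul_le_mul_of_nonneg_left ?_ (hw p)
          refine le_trans (Finset.sum_le_sum fun q hq => mul_le_mul_of_nonneg_left ?_ (hw q))
            (hE p hp)
          refine Nat.cast_le.2 (Finset.card_le_card_of_injOn Prod.fst ?_ ?_)
          · intro h hh
            simp only [Finset.coe_filter, Finset.mem_range, Set.mem_ofPred_eq, hH',
              Finset.mem_filter] at hh ⊢
            exact ⟨hh.1.2, hh.2.1.trans hh.2.2.symm⟩
          · intro h hh h' hh' heq
            simp only [Finset.coe_filter, Set.mem_ofPred_eq] at hh hh'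
            refine Prod.ext heq ?_
            rw [← hh.2.1, ← hh'.2.1, heq]
      _ = (∑ p ∈ P, w p) * M := (Finset.sum_mul _ _ _).symm
  have hW : 0 ≤ ∑ p ∈ P, w p := Finset.sum_nonneg fun p _ => hw p
  calc (L * ∑ p ∈ P, w p) ^ 2
      ≤ (∑ h ∈ H', ∑ p ∈ P, if row k h.1 p = h.2 then w p else 0) ^ 2 := by gcongr
    _ ≤ H'.card * ∑ h ∈ H', (∑ p ∈ P, if row k h.1 p = h.2 then w p else 0) ^ 2 :=
        sq_sum_le_card_mul_sum_sq
    _ ≤ H.card * ((∑ p ∈ P, w p) * M) := by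
        refine mul_le_mul (Nat.cast_le.2 (Finset.card_le_card hsub)) h2
          (Finset.sum_nonneg fun _ _ => sq_nonneg _) (Nat.cast_nonneg _)

/-- If every line of `E` meets the squares of `H` in a proportion `lam` of the columns of scale `2^-k`,
then `E` is covered by dyadic squares whose `s`-dimensional content (with `a = 2^-s`) is controlled by
the cardinality of `H`. -/
theorem exists_finite_cover (k : ℕ) (E : Set (ℝ × ℝ)) (hE : E ⊆ Set.Ico 0 1 ×ˢ Set.Ico 0 1)
    (a : ℝ) (ha : 1 ≤ 2 * a) (lam : ℝ) (hlam : 0 ≤ lam) (H : Finset (ℕ × ℤ))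
    (hH : ∀ p ∈ E, lam * 2 ^ k ≤
      (((Finset.range (2 ^ k)).filter fun j => (j, row k j p) ∈ H).card : ℝ)) :
    ∃ Q : Finset (ℕ × (ℤ × ℤ)), (∀ p ∈ E, ∃ j, (j, cell j p) ∈ Q) ∧
      lam ^ 2 * ∑ z ∈ Q, a ^ z.1 ≤ 90 * H.card * (k + 1) * (a / 2) ^ k := by
  classical
  have ha0 : 0 ≤ a := by linarith
  have hdist : ∀ p ∈ E, ∀ q ∈ E, dist p q ≤ 1 := by
    intro p hp q hq
    obtain ⟨⟨h1, h2⟩, h3, h4⟩ := hE hp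
    obtain ⟨⟨h5, h6⟩, h7, h8⟩ := hE hq
    rw [Prod.dist_eq, Real.dist_eq, Real.dist_eq]
    refine max_le (abs_le.2 ⟨?_, ?_⟩) (abs_le.2 ⟨?_, ?_⟩) <;> linarith
  have hfin : (cell k '' E).Finite := by
    refine (Set.Finite.prod (Set.finite_Icc (0 : ℤ) (2 ^ k)) (Set.finite_Icc (0 : ℤ) (2 ^ k))).subset ?_
    have : ∀ x : ℝ, x ∈ Set.Ico (0 : ℝ) 1 → ⌊2 ^ k * x⌋ ∈ Set.Icc (0 : ℤ) (2 ^ k) := by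
      intro x hx
      refine ⟨Int.floor_nonneg.2 (mul_nonneg (by positivity) hx.1), ?_⟩
      have : ((⌊2 ^ k * x⌋ : ℤ) : ℝ) ≤ ((2 ^ k : ℤ) : ℝ) := by
        push_cast
        refine (Int.floor_le _).trans ?_
        exact mul_le_of_le_one_right (by positivity) hx.2.le
      exact_mod_cast this
    rintro _ ⟨p, hp, rfl⟩
    exact ⟨this _ (hE hp).1, this _ (hE hp).2⟩
  choose! g hgE hg using fun z (hz : z ∈ cell k '' E) => hz
  -- one representative of `E` in each cell of level `k` that meets `E`
  set P := hfin.toFinset.image g with hP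
  have hPE : ∀ p ∈ P, p ∈ E := by
    intro p hp
    obtain ⟨z, hz, rfl⟩ := Finset.mem_image.1 hp
    exact hgE z (hfin.mem_toFinset.1 hz)
  obtain ⟨w, hw0, hwc, Q, hQ, hsum⟩ :=
    exists_weight_cover P k cell cell_congr (fun j => a ^ j) (fun j => by positivity)
  refine ⟨Q, ?_, ?_⟩
  · intro p hp
    have hmem : cell k p ∈ cell k '' E := ⟨p, hp, rfl⟩
    obtain ⟨j, hj, hjQ⟩ := hQ (g (cell k p))
      (Finset.mem_image_of_mem _ (hfin.mem_toFinset.2 hmem))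
    refine ⟨j, ?_⟩
    rwa [cell_congr j k _ _ hj (hg _ hmem)] at hjQ
  · have hbd := mass_sq_le k P w hw0 (90 * (k + 1) * (2 * a) ^ k) (lam * 2 ^ k) (by positivity) H
      (fun p hp => energy_le k P w hw0 a ha hwc p fun q hq => hdist p (hPE p hp) q (hPE q hq))
      (fun p hp => hH p (hPE p hp))
    rw [hsum]
    set W := ∑ p ∈ P, w p with hWdef
    have hW : 0 ≤ W := Finset.sum_nonneg fun p _ => hw0 p
    rcases hW.eq_or_lt with h0 | hpos
    · rw [← h0, mul_zero]; positivity
    · have h4 : (0:ℝ) < 4 ^ k := by positivity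
      have e1 : (2:ℝ) ^ k * 2 ^ k = 4 ^ k := by rw [← mul_pow]; norm_num
      have e2 : (2 * a) ^ k = 4 ^ k * (a / 2) ^ k := by rw [← mul_pow]; ring
      rw [e2] at hbd
      refine le_of_mul_le_mul_right ?_ (mul_pos h4 hpos)
      calc lam ^ 2 * W * (4 ^ k * W) = (lam * 2 ^ k * W) ^ 2 := by rw [← e1]; ring
        _ ≤ _ := hbd
        _ = _ := by ring

/-! ### Hausdorff measure and dyadic coverings -/

/-- Vanishing Hausdorff content implies vanishing Hausdorff measure: the diameters in a cover of small
content are automatically small. -/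
theorem hausdorffMeasure_eq_zero_of_content {X : Type*} [EMetricSpace X] [MeasurableSpace X]
    [BorelSpace X] {d : ℝ} (hd : 0 < d) (s : Set X)
    (h : ∀ ε : ℝ≥0∞, ε ≠ 0 → ∃ (ι : Type) (_ : Countable ι) (t : ι → Set X),
      s ⊆ ⋃ i, t i ∧ ∑' i, Metric.ediam (t i) ^ d ≤ ε) : μH[d] s = 0 := by
  have hε : ∀ n : ℕ, ((n : ℝ≥0∞))⁻¹ ≠ 0 := fun n => ENNReal.inv_ne_zero.2 (ENNReal.natCast_ne_top n)
  choose ι hι t hst ht using fun n : ℕ => h _ (hε n)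
  have hlim := ENNReal.tendsto_inv_nat_nhds_zero
  have hr : Filter.Tendsto (fun n : ℕ => ((n : ℝ≥0∞)⁻¹) ^ d⁻¹) Filter.atTop (nhds 0) := by
    have := (ENNReal.continuous_rpow_const (y := d⁻¹)).tendsto 0
    rw [ENNReal.zero_rpow_of_pos (inv_pos.2 hd)] at this
    exact this.comp hlim
  have key := Measure.hausdorffMeasure_le_liminf_tsum d s (l := Filter.atTop) _ hr t
    (Filter.Eventually.of_forall fun n i => by
      rw [ENNReal.le_rpow_inv_iff hd]
      exact (ENNReal.le_tsum i).trans (ht n))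
    (Filter.Eventually.of_forall hst)
  refine le_antisymm (key.trans ?_) (zero_le)
  rw [← hlim.liminf_eq]
  exact Filter.liminf_le_liminf (Filter.Eventually.of_forall ht)

/-- Rounds the diameter of `T` up to a power `2^-k`, at the cost of a constant factor in the `d`-th power.
The error `δ` is needed for sets of diameter zero. -/
theorem exists_dyadic_scale {X : Type*} [EMetricSpace X] (T : Set X) (d : ℝ) (hd : 0 < d)
    (hT : Metric.ediam T ≤ 1) (δ : ℝ≥0∞) (hδ : δ ≠ 0) :
    ∃ k : ℕ, Metric.ediam T ≤ ENNReal.ofReal ((1 / 2) ^ k) ∧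
      ENNReal.ofReal (((1 / 2 : ℝ) ^ d) ^ k) ≤
        ENNReal.ofReal (((1 / 2 : ℝ) ^ d)⁻¹) * ((⨆ _ : T.Nonempty, Metric.ediam T ^ d) + δ) := by
  set θ : ℝ := (1 / 2 : ℝ) ^ d with hθ
  have hθ0 : 0 < θ := by positivity
  have hθ1 : θ < 1 := Real.rpow_lt_one (by norm_num) (by norm_num) hd
  rcases eq_or_ne (Metric.ediam T) 0 with h0 | h0
  · have hlim := ENNReal.tendsto_pow_atTop_nhds_zero_of_lt_one
      (r := ENNReal.ofReal θ) (by simpa using hθ1)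
    obtain ⟨k, hk⟩ := (hlim.eventually (gt_mem_nhds (pos_iff_ne_zero.2 hδ))).exists
    refine ⟨k, by rw [h0]; exact zero_le, ?_⟩
    rw [ENNReal.ofReal_pow hθ0.le]
    calc ENNReal.ofReal θ ^ k ≤ 1 * δ := by rw [one_mul]; exact hk.le
      _ ≤ _ := by
        gcongr
        · rw [ENNReal.one_le_ofReal]; exact (one_le_inv₀ hθ0).2 hθ1.le
        · exact le_add_self
  · have hne : T.Nonempty := by
      by_contra h
      rw [Set.not_nonempty_iff_eq_empty] at h
      exact h0 (by rw [h]; simp)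
    have hfin : Metric.ediam T ≠ ⊤ := ne_top_of_le_ne_top ENNReal.one_ne_top hT
    set D := (Metric.ediam T).toReal with hD
    have hD0 : 0 < D := ENNReal.toReal_pos h0 hfin
    have hD1 : D ≤ 1 := by
      have := ENNReal.toReal_mono ENNReal.one_ne_top hT
      simpa using this
    have hDT : Metric.ediam T = ENNReal.ofReal D := (ENNReal.ofReal_toReal hfin).symm
    obtain ⟨k, hk1, hk2⟩ := exists_nat_pow_near_of_lt_one hD0 hD1 (by norm_num : (0:ℝ) < 1 / 2)
      (by norm_num)
    refine ⟨k, by rw [hDT]; exact ENNReal.ofReal_le_ofReal hk2, ?_⟩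
    rw [ciSup_pos hne, hDT, ENNReal.ofReal_rpow_of_pos hD0]
    refine le_trans ?_ (mul_le_mul_right (le_self_add) _)
    rw [← ENNReal.ofReal_mul (by positivity)]
    refine ENNReal.ofReal_le_ofReal ?_
    rw [le_inv_mul_iff₀ hθ0, ← pow_succ', hθ, ← Real.rpow_natCast, ← Real.rpow_mul (by norm_num),
      mul_comm d, Real.rpow_mul (by norm_num), Real.rpow_natCast]
    exact Real.rpow_le_rpow (by positivity) hk1.le hd.le

theorem exists_dyadic_cover {X : Type*} [EMetricSpace X] [MeasurableSpace X] [BorelSpace X]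
    (A : Set X) (d : ℝ) (hd : 0 < d) (hA : μH[d] A = 0) (ε : ℝ≥0∞) (hε : ε ≠ 0) :
    ∃ (t : ℕ → Set X) (κ : ℕ → ℕ), A ⊆ ⋃ n, t n ∧
      (∀ n, Metric.ediam (t n) ≤ ENNReal.ofReal ((1 / 2) ^ κ n)) ∧
      ∑' n, ENNReal.ofReal (((1 / 2 : ℝ) ^ d) ^ κ n) ≤ ε := by
  set C := ENNReal.ofReal (((1 / 2 : ℝ) ^ d)⁻¹) with hC
  have hC0 : C ≠ 0 := by
    rw [hC]
    simp only [ne_eq, ENNReal.ofReal_eq_zero, not_le]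
    positivity
  have hCt : C ≠ ⊤ := ENNReal.ofReal_ne_top
  have hε' : ε / C / 2 ≠ 0 := by simp [ENNReal.div_eq_zero_iff, hε, hCt]
  rw [Measure.hausdorffMeasure_apply] at hA
  have h1 : _ ≤ (0 : ℝ≥0∞) := (le_iSup₂ (f := fun (r : ℝ≥0∞) (_ : 0 < r) =>
    ⨅ (t : ℕ → Set X) (_ : A ⊆ ⋃ n, t n) (_ : ∀ n, Metric.ediam (t n) ≤ r),
          ∑' n, ⨆ _ : (t n).Nonempty, Metric.ediam (t n) ^ d) 1 one_pos).trans hA.le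
  have h2 := h1.trans_lt (pos_iff_ne_zero.2 hε')
  simp only [iInf_lt_iff] at h2
  obtain ⟨t, hAt, ht1, htsum⟩ := h2
  obtain ⟨δ, hδ0, hδ⟩ := ENNReal.exists_pos_sum_of_countable' hε' ℕ
  choose κ hκ1 hκ2 using fun n => exists_dyadic_scale (t n) d hd (ht1 n) (δ n) (hδ0 n).ne'
  refine ⟨t, κ, hAt, hκ1, ?_⟩
  calc _ ≤ ∑' n, C * ((⨆ _ : (t n).Nonempty, Metric.ediam (t n) ^ d) + δ n) :=
        ENNReal.tsum_le_tsum hκ2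
    _ = C * ((∑' n, ⨆ _ : (t n).Nonempty, Metric.ediam (t n) ^ d) + ∑' n, δ n) := by
        rw [ENNReal.tsum_mul_left, ENNReal.tsum_add]
    _ ≤ C * (ε / C / 2 + ε / C / 2) := by gcongr
    _ = ε := by rw [ENNReal.add_halves, ENNReal.mul_div_cancel hC0 hCt]

theorem abs_sub_le_of_ediam_le {T : Set (ℝ × ℝ)} {r : ℝ} (hr : 0 ≤ r)
    (hT : Metric.ediam T ≤ ENNReal.ofReal r) {u v : ℝ × ℝ} (hu : u ∈ T) (hv : v ∈ T) :
    |u.1 - v.1| ≤ r ∧ |u.2 - v.2| ≤ r := by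
  have h := (Metric.edist_le_ediam_of_mem hu hv).trans hT
  rw [edist_dist, ENNReal.ofReal_le_ofReal_iff hr, Prod.dist_eq, Real.dist_eq, Real.dist_eq,
    max_le_iff] at h
  exact h

/-- A set of diameter at most `2^-k` is met by lines of slope in `[0,1)` in at most `12` squares, a line
being assigned in each column the row of its left end point. That row may lie one below the row
of the actual point of the line in the set, whence `3 × 4` squares instead of `3 × 3`. -/
theorem exists_box (T : Set (ℝ × ℝ)) (k : ℕ) (hT : Metric.ediam T ≤ ENNReal.ofReal ((1 / 2) ^ k)) :
    ∃ H : Finset (ℕ × ℤ), H.card ≤ 12 ∧ ∀ p : ℝ × ℝ, 0 ≤ p.1 → p.1 < 1 → ∀ x : ℝ, 0 ≤ x →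
      (x, p.1 * x + p.2) ∈ T → (⌊2 ^ k * x⌋₊, row k ⌊2 ^ k * x⌋₊ p) ∈ H := by
  rcases T.eq_empty_or_nonempty with rfl | ⟨v, hv⟩
  · exact ⟨∅, by simp, by simp⟩
  refine ⟨(Finset.Icc (⌊2 ^ k * v.1⌋ - 1) (⌊2 ^ k * v.1⌋ + 1)).image Int.toNat ×ˢ
    Finset.Icc (⌊2 ^ k * v.2⌋ - 2) (⌊2 ^ k * v.2⌋ + 1), ?_, ?_⟩
  · rw [Finset.card_product]
    have h1 := Finset.card_image_le (s := Finset.Icc (⌊2 ^ k * v.1⌋ - 1) (⌊2 ^ k * v.1⌋ + 1))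
      (f := Int.toNat)
    rw [Int.card_Icc] at h1 ⊢
    have h2 : (⌊2 ^ k * v.1⌋ + 1 + 1 - (⌊2 ^ k * v.1⌋ - 1)).toNat = 3 := by omega
    have h3 : (⌊2 ^ k * v.2⌋ + 1 + 1 - (⌊2 ^ k * v.2⌋ - 2)).toNat = 4 := by omega
    rw [h2] at h1
    rw [h3]
    omega
  · intro p hp0 hp1 x hx hxT
    have h2 : (0 : ℝ) < 2 ^ k := by positivity
    obtain ⟨h3, h4⟩ := abs_sub_le_of_ediam_le (by positivity) hT hv hxT
    have hscale : ∀ y : ℝ, |y| ≤ (1 / 2) ^ k → |2 ^ k * y| ≤ 1 := by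
      intro y hy
      rw [abs_mul, abs_of_pos h2]
      calc 2 ^ k * |y| ≤ 2 ^ k * (1 / 2) ^ k := by gcongr
        _ = 1 := by rw [← mul_pow]; norm_num
    have h5 := hscale _ h3
    have h6 := hscale _ h4
    rw [mul_sub] at h5 h6
    have h7 := floor_mem_Icc_of_abs_sub_le h5
    have h8 := floor_mem_Icc_of_abs_sub_le h6
    refine Finset.mem_product.2 ⟨Finset.mem_image.2 ⟨_, h7, rfl⟩, ?_⟩
    have h9 := Nat.floor_le (a := 2 ^ k * x) (by positivity)
    have h10 := Nat.lt_floor_add_one (2 ^ k * x)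
    simp only [Finset.mem_Icc] at h8 ⊢
    set n := ⌊2 ^ k * x⌋₊
    have e : 2 ^ k * (p.1 * x + p.2) = p.1 * (2 ^ k * x) + 2 ^ k * p.2 := by ring
    rw [e] at h8
    have h11 : row k n p ≤ ⌊p.1 * (2 ^ k * x) + 2 ^ k * p.2⌋ := by
      refine Int.floor_mono ?_
      gcongr
    have h12 : ⌊p.1 * (2 ^ k * x) + 2 ^ k * p.2⌋ ≤ row k n p + 1 := by
      rw [row, ← Int.floor_add_one]
      refine Int.floor_mono ?_
      nlinarith
    omega

/-! ### Content of the parameter set -/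

/-- Pigeonhole over scales: if the sets `F k` cover a line over `[0,1)`, then for some `k` the part
caught by `F k` occupies at least `lam k * 2^k` columns, by countable subadditivity of Lebesgue (outer)
measure. -/
theorem exists_rich_scale (F : ℕ → Set (ℝ × ℝ)) (lam : ℕ → ℝ)
    (hsum : ∑' k, ENNReal.ofReal (lam k) < 1) (H : ℕ → Finset (ℕ × ℤ)) (p : ℝ × ℝ)
    (hH : ∀ k, ∀ x : ℝ, 0 ≤ x → (x, p.1 * x + p.2) ∈ F k →
      (⌊2 ^ k * x⌋₊, row k ⌊2 ^ k * x⌋₊ p) ∈ H k)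
    (hF : ∀ x : ℝ, 0 ≤ x → x < 1 → ∃ k, (x, p.1 * x + p.2) ∈ F k) :
    ∃ k, lam k * 2 ^ k ≤
      (((Finset.range (2 ^ k)).filter fun j => (j, row k j p) ∈ H k).card : ℝ) := by
  by_contra! hcon
  set J : ℕ → Finset ℕ := fun k => (Finset.range (2 ^ k)).filter fun j => (j, row k j p) ∈ H k
  have hcov : Set.Ico (0 : ℝ) 1 ⊆
      ⋃ k, ⋃ j ∈ J k, Set.Ico ((j : ℝ) / 2 ^ k) (((j : ℝ) + 1) / 2 ^ k) := by
    intro x hx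
    obtain ⟨k, hk⟩ := hF x hx.1 hx.2
    have h2 : (0 : ℝ) < 2 ^ k := by positivity
    have hx0 : 0 ≤ 2 ^ k * x := mul_nonneg h2.le hx.1
    refine Set.mem_iUnion.2 ⟨k, Set.mem_iUnion₂.2 ⟨⌊2 ^ k * x⌋₊, ?_, ?_, ?_⟩⟩
    · refine Finset.mem_filter.2 ⟨Finset.mem_range.2 ?_, hH k x hx.1 hk⟩
      rw [Nat.floor_lt hx0]
      push_cast
      exact mul_lt_of_lt_one_right h2 hx.2
    · rw [div_le_iff₀ h2, mul_comm x]
      exact Nat.floor_le hx0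
    · rw [lt_div_iff₀ h2, mul_comm x]
      exact Nat.lt_floor_add_one _
  have hvol : volume (Set.Ico (0 : ℝ) 1) ≤ ∑' k, ENNReal.ofReal (lam k) := by
    refine (measure_mono hcov).trans ((measure_iUnion_le _).trans (ENNReal.tsum_le_tsum fun k => ?_))
    refine (measure_biUnion_finset_le _ _).trans ?_
    have h2 : (0 : ℝ) < 2 ^ k := by positivity
    calc ∑ j ∈ J k, volume (Set.Ico ((j : ℝ) / 2 ^ k) (((j : ℝ) + 1) / 2 ^ k))
        = ∑ j ∈ J k, ENNReal.ofReal (1 / 2 ^ k) := by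
          refine Finset.sum_congr rfl fun j _ => ?_
          rw [Real.volume_Ico]
          congr 1
          ring
      _ = ENNReal.ofReal ((J k).card * (1 / 2 ^ k)) := by
          rw [Finset.sum_const, nsmul_eq_mul, ENNReal.ofReal_mul (Nat.cast_nonneg _),
            ENNReal.ofReal_natCast]
      _ ≤ ENNReal.ofReal (lam k) := by
          refine ENNReal.ofReal_le_ofReal ?_
          rw [mul_one_div, div_le_iff₀ h2]
          exact (hcon k).le
  rw [Real.volume_Ico] at hvol
  simp only [sub_zero, ENNReal.ofReal_one] at hvol
  exact absurd hvol (not_le.2 hsum)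

/-- A choice of thresholds: `lam k` is a small multiple of `ρ^k` with `ρ = (b / θ)^(1/4)`, which decays
slowly enough for `lam k ^ 2` to be absorbed in the gap between `b` and `θ`. -/
theorem exists_threshold {b θ : ℝ} (hb : 0 < b) (hbθ : b < θ) :
    ∃ (lam : ℕ → ℝ) (C : ℝ), (∀ k, 0 < lam k) ∧ ∑' k, ENNReal.ofReal (lam k) < 1 ∧ 0 < C ∧
      ∀ k : ℕ, (k + 1) * b ^ k ≤ C * lam k ^ 2 * θ ^ k := by
  have hθ : 0 < θ := hb.trans hbθ
  set τ := b / θ with hτ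
  have hτ0 : 0 < τ := by positivity
  have hτ1 : τ < 1 := (div_lt_one hθ).2 hbθ
  set r := √τ with hr
  have hr0 : 0 < r := Real.sqrt_pos.2 hτ0
  have hr1 : r < 1 := by rw [hr, Real.sqrt_lt' one_pos]; simpa using hτ1
  have hrr : r * r = τ := Real.mul_self_sqrt hτ0.le
  set ρ := √r with hρ
  have hρ0 : 0 < ρ := Real.sqrt_pos.2 hr0
  have hρ1 : ρ < 1 := by rw [hρ, Real.sqrt_lt' one_pos]; simpa using hr1
  have hρρ : ρ ^ 2 = r := Real.sq_sqrt hr0.le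
  obtain ⟨M, hM⟩ := (tendsto_self_mul_const_pow_of_lt_one hr0.le hr1).bddAbove_range
  have hM' : ∀ k : ℕ, (k : ℝ) * r ^ k ≤ M := fun k => hM ⟨k, rfl⟩
  have hM0 : 0 ≤ M := by simpa using hM' 0
  set c := (1 - ρ) / 2 with hc
  have hc0 : 0 < c := by rw [hc]; linarith
  refine ⟨fun k => c * ρ ^ k, (M + 1) / c ^ 2, fun k => by positivity, ?_, by positivity, ?_⟩
  · have h := (hasSum_geometric_of_lt_one hρ0.le hρ1).mul_left c
    rw [← ENNReal.ofReal_tsum_of_nonneg (fun k => by positivity) h.summable, h.tsum_eq]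
    rw [← ENNReal.ofReal_one]
    refine (ENNReal.ofReal_lt_ofReal_iff one_pos).2 ?_
    rw [hc]
    have : 1 - ρ ≠ 0 := by linarith
    field_simp
    norm_num
  · intro k
    have h1 : b ^ k = r ^ k * r ^ k * θ ^ k := by
      rw [← mul_pow, hrr, ← mul_pow, hτ, div_mul_cancel₀ _ hθ.ne']
    have h2 : r ^ k ≤ 1 := pow_le_one₀ hr0.le hr1.le
    have h3 : (k + 1) * r ^ k ≤ M + 1 := by linarith [hM' k]
    have h4 : (ρ ^ k) ^ 2 = r ^ k := by rw [← pow_mul, mul_comm, pow_mul, hρρ]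
    calc (k + 1) * b ^ k = ((k + 1) * r ^ k) * (r ^ k * θ ^ k) := by rw [h1]; ring
      _ ≤ (M + 1) * (r ^ k * θ ^ k) := by gcongr
      _ = (M + 1) / c ^ 2 * (c * ρ ^ k) ^ 2 * θ ^ k := by
          rw [mul_pow, h4]; field_simp

/-- If `A` has zero `d`-dimensional measure and contains the unit segments of all lines of `E`, then
`E` has zero `s`-dimensional dyadic content, where `a = 2^-s` and the hypothesis `had` says `d < 1 + s`. -/
theorem exists_cell_cover (E A : Set (ℝ × ℝ)) (hE : E ⊆ Set.Ico 0 1 ×ˢ Set.Ico 0 1)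
    (hEA : ∀ p ∈ E, ∀ x : ℝ, 0 ≤ x → x < 1 → (x, p.1 * x + p.2) ∈ A) (d : ℝ) (hd : 0 < d)
    (hA : μH[d] A = 0) (a : ℝ) (ha : 1 ≤ 2 * a) (had : a / 2 < (1 / 2 : ℝ) ^ d)
    (ε : ℝ≥0∞) (hε : ε ≠ 0) :
    ∃ (ι : Type) (_ : Countable ι) (j : ι → ℕ) (z : ι → ℤ × ℤ),
      (∀ p ∈ E, ∃ i, cell (j i) p = z i) ∧ ∑' i, ENNReal.ofReal (a ^ j i) ≤ ε := by
  have ha0 : 0 < a := by linarith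
  set θ := (1 / 2 : ℝ) ^ d with hθ
  have hθ0 : 0 < θ := by positivity
  obtain ⟨lam, C, hlam0, hlam1, hC0, hC⟩ := exists_threshold (by positivity) had
  set D := ENNReal.ofReal (1080 * C) with hD
  have hD0 : D ≠ 0 := by
    rw [hD]
    simp only [ne_eq, ENNReal.ofReal_eq_zero, not_le]
    positivity
  have hDt : D ≠ ⊤ := ENNReal.ofReal_ne_top
  have hε' : min 1 (ε / D) ≠ 0 := by
    refine (lt_min one_pos (pos_iff_ne_zero.2 ?_)).ne'
    simp [ENNReal.div_eq_zero_iff, hε, hDt]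
  obtain ⟨t, κ, hAt, htκ, hsum⟩ := exists_dyadic_cover A d hd hA _ hε'
  have hfin : ∀ k, (κ ⁻¹' {k}).Finite := by
    intro k
    have h := ENNReal.finite_const_le_of_tsum_ne_top
      (ne_top_of_le_ne_top ENNReal.one_ne_top (hsum.trans (min_le_left _ _)))
      (ε := ENNReal.ofReal (θ ^ k)) (by simp only [ne_eq, ENNReal.ofReal_eq_zero, not_le]; positivity)
    refine h.subset ?_
    rintro n rfl
    exact le_refl (ENNReal.ofReal (θ ^ κ n))
  choose box hboxc hbox using fun n => exists_box (t n) (κ n) (htκ n)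
  classical
  set H : ℕ → Finset (ℕ × ℤ) := fun k => (hfin k).toFinset.biUnion box with hHdef
  have hHc : ∀ k, ((H k).card : ℝ) ≤ 12 * (hfin k).toFinset.card := by
    intro k
    have := Finset.card_biUnion_le_card_mul (hfin k).toFinset box 12 fun n _ => hboxc n
    rw [mul_comm] at this
    exact_mod_cast this
  -- the lines that are rich at scale `2^-k`
  set Ek : ℕ → Set (ℝ × ℝ) := fun k => {p | p ∈ E ∧ lam k * 2 ^ k ≤
      (((Finset.range (2 ^ k)).filter fun j => (j, row k j p) ∈ H k).card : ℝ)}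
  have hEk : ∀ p ∈ E, ∃ k, p ∈ Ek k := by
    intro p hp
    have h1 : ∀ k, ∀ x : ℝ, 0 ≤ x → (x, p.1 * x + p.2) ∈ ⋃ n ∈ κ ⁻¹' {k}, t n →
        (⌊2 ^ k * x⌋₊, row k ⌊2 ^ k * x⌋₊ p) ∈ H k := by
      intro k x hx hxk
      simp only [Set.mem_iUnion] at hxk
      obtain ⟨n, rfl, hn⟩ := hxk
      exact Finset.mem_biUnion.2 ⟨n, by simp, hbox n p (hE hp).1.1 (hE hp).1.2 x hx hn⟩
    obtain ⟨k, hk⟩ := exists_rich_scale (fun k => ⋃ n ∈ κ ⁻¹' {k}, t n) lam hlam1 H p h1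
      fun x hx0 hx1 => by
        obtain ⟨n, hn⟩ := Set.mem_iUnion.1 (hAt (hEA p hp x hx0 hx1))
        exact ⟨κ n, Set.mem_iUnion₂.2 ⟨n, rfl, hn⟩⟩
    exact ⟨k, hp, hk⟩
  choose Q hQ hQs using fun k => exists_finite_cover k (Ek k) (fun p hp => hE hp.1) a ha (lam k)
    (hlam0 k).le (H k) (fun p hp => hp.2)
  refine ⟨Σ k, Q k, inferInstance, fun i => i.2.1.1, fun i => i.2.1.2, ?_, ?_⟩
  · intro p hp
    obtain ⟨k, hk⟩ := hEk p hp
    obtain ⟨j, hj⟩ := hQ k p hk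
    exact ⟨⟨k, ⟨_, hj⟩⟩, rfl⟩
  · have hk : ∀ k, ∑ z ∈ Q k, a ^ z.1 ≤ 1080 * C * ((hfin k).toFinset.card * θ ^ k) := by
      intro k
      have hl : 0 < lam k ^ 2 := pow_pos (hlam0 k) 2
      refine le_of_mul_le_mul_left ?_ hl
      have hnn : 0 ≤ (k + 1 : ℝ) * (a / 2) ^ k := by positivity
      calc lam k ^ 2 * ∑ z ∈ Q k, a ^ z.1 ≤ 90 * (H k).card * (k + 1) * (a / 2) ^ k := hQs k
        _ = 90 * (H k).card * ((k + 1) * (a / 2) ^ k) := by ring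
        _ ≤ 90 * (12 * (hfin k).toFinset.card) * (C * lam k ^ 2 * θ ^ k) := by
            refine mul_le_mul ?_ (hC k) hnn (by positivity)
            gcongr
            exact hHc k
        _ = _ := by ring
    rw [ENNReal.tsum_sigma']
    calc ∑' k, ∑' z : Q k, ENNReal.ofReal (a ^ z.1.1)
        ≤ ∑' k, D * ∑' n : κ ⁻¹' {k}, ENNReal.ofReal (θ ^ κ n) := by
          refine ENNReal.tsum_le_tsum fun k => ?_
          rw [Finset.tsum_subtype (Q k) (fun z => ENNReal.ofReal (a ^ z.1)),
            ← ENNReal.ofReal_sum_of_nonneg (fun z _ => by positivity)]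
          refine (ENNReal.ofReal_le_ofReal (hk k)).trans ?_
          rw [ENNReal.ofReal_mul (by positivity)]
          gcongr
          have : ∑' n : κ ⁻¹' {k}, ENNReal.ofReal (θ ^ κ n) =
              ∑ n ∈ (hfin k).toFinset, ENNReal.ofReal (θ ^ κ n) := by
            rw [← Finset.tsum_subtype (hfin k).toFinset (fun n => ENNReal.ofReal (θ ^ κ n))]
            have hs : κ ⁻¹' {k} = ((hfin k).toFinset : Set ℕ) := (hfin k).coe_toFinset.symm
            exact tsum_congr_set_coe (fun n => ENNReal.ofReal (θ ^ κ n)) hs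
          rw [this, Finset.sum_congr rfl (g := fun _ => ENNReal.ofReal (θ ^ k)), Finset.sum_const,
            nsmul_eq_mul, ENNReal.ofReal_mul (Nat.cast_nonneg _), ENNReal.ofReal_natCast]
          intro n hn
          have : κ n = k := by simpa using hn
          rw [this]
      _ = D * ∑' n, ENNReal.ofReal (θ ^ κ n) := by
          rw [ENNReal.tsum_mul_left, ENNReal.tsum_fiberwise (fun n => ENNReal.ofReal (θ ^ κ n)) κ]
      _ ≤ D * (ε / D) := by
          gcongr
          exact hsum.trans (min_le_right _ _)
      _ = ε := ENNReal.mul_div_cancel hD0 hDt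

/-! ### From parameters to lines -/

/-- If the parameter set has zero `s`-dimensional content, then the union of the lines over `[-R, R)` has
zero `(1 + s)`-dimensional measure: the part over a parameter square of side `2^-j` is cut into
`2 R 2^j` columns, each piece having diameter at most `(R + 2) 2^-j`. -/
theorem hausdorffMeasure_lines_eq_zero (E : Set (ℝ × ℝ)) (hE : E ⊆ Set.Ico 0 1 ×ˢ Set.Ico 0 1)
    (s : ℝ) (hs : 0 < s)
    (hcov : ∀ ε : ℝ≥0∞, ε ≠ 0 → ∃ (ι : Type) (_ : Countable ι) (j : ι → ℕ) (z : ι → ℤ × ℤ),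
      (∀ p ∈ E, ∃ i, cell (j i) p = z i) ∧ ∑' i, ENNReal.ofReal (((1 / 2 : ℝ) ^ s) ^ j i) ≤ ε)
    (R : ℕ) :
    μH[1 + s] {v : ℝ × ℝ | ∃ p ∈ E, v.1 ∈ Set.Ico (-R : ℝ) R ∧ v.2 = p.1 * v.1 + p.2} = 0 := by
  refine hausdorffMeasure_eq_zero_of_content (by linarith) _ fun ε hε => ?_
  set K : ℝ := 2 * (R + 1) * (R + 2) ^ (1 + s) with hK
  have hK0 : ENNReal.ofReal K ≠ 0 := by
    simp only [ne_eq, ENNReal.ofReal_eq_zero, not_le]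
    positivity
  have hKt : ENNReal.ofReal K ≠ ⊤ := ENNReal.ofReal_ne_top
  obtain ⟨ι, hι, j, z, hz, hsum⟩ := hcov (ε / ENNReal.ofReal K)
    (by simp [ENNReal.div_eq_zero_iff, hε, hKt])
  refine ⟨Σ i : ι, Fin (2 * R * 2 ^ j i), inferInstance, fun y => {v : ℝ × ℝ | ∃ p ∈ E,
    v.1 ∈ Set.Ico (-R : ℝ) R ∧ v.2 = p.1 * v.1 + p.2 ∧ cell (j y.1) p = z y.1 ∧
      ⌊2 ^ j y.1 * v.1⌋ + R * 2 ^ j y.1 = (y.2 : ℕ)}, ?_, ?_⟩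
  · rintro v ⟨p, hp, hv, hvp⟩
    obtain ⟨i, hi⟩ := hz p hp
    have h2 : (0 : ℝ) < 2 ^ j i := by positivity
    have h0 : 0 ≤ ⌊2 ^ j i * v.1⌋ + R * 2 ^ j i := by
      have : -(R * 2 ^ j i : ℤ) ≤ ⌊2 ^ j i * v.1⌋ := by
        rw [Int.le_floor]
        push_cast
        nlinarith [hv.1]
      linarith
    have h1 : ⌊2 ^ j i * v.1⌋ + R * 2 ^ j i < 2 * R * 2 ^ j i := by
      have : ⌊2 ^ j i * v.1⌋ < R * 2 ^ j i := by
        rw [Int.floor_lt]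
        push_cast
        nlinarith [hv.2]
      linarith
    refine Set.mem_iUnion.2 ⟨⟨i, ⟨(⌊2 ^ j i * v.1⌋ + R * 2 ^ j i).toNat, ?_⟩⟩, p, hp, hv, hvp, hi, ?_⟩
    · zify
      rw [Int.toNat_of_nonneg h0]
      exact h1
    · simp only
      rw [Int.toNat_of_nonneg h0]
  · have hdiam : ∀ y : Σ i : ι, Fin (2 * R * 2 ^ j i), Metric.ediam {v : ℝ × ℝ | ∃ p ∈ E,
        v.1 ∈ Set.Ico (-R : ℝ) R ∧ v.2 = p.1 * v.1 + p.2 ∧ cell (j y.1) p = z y.1 ∧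
        ⌊2 ^ j y.1 * v.1⌋ + R * 2 ^ j y.1 = (y.2 : ℕ)} ≤
        ENNReal.ofReal ((R + 2) * (1 / 2) ^ j y.1) := by
      rintro ⟨i, m⟩
      refine Metric.ediam_le ?_
      rintro u ⟨p, hp, hu, hup, hpz, hum⟩ v ⟨q, hq, hv, hvq, hqz, hvm⟩
      simp only at hpz hqz hum hvm
      have h2 : (0 : ℝ) < 2 ^ j i := by positivity
      have hscale : ∀ x y : ℝ, ⌊2 ^ j i * x⌋ = ⌊2 ^ j i * y⌋ → |x - y| ≤ (1 / 2) ^ j i := by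
        intro x y h
        have := (Int.abs_sub_lt_one_of_floor_eq_floor h).le
        rw [← mul_sub, abs_mul, abs_of_pos h2] at this
        rw [one_div, inv_pow, ← one_div, le_div_iff₀ h2]
        linarith
      have hc := hpz.trans hqz.symm
      simp only [cell, Prod.mk.injEq] at hc
      have d1 := hscale _ _ hc.1
      have d2 := hscale _ _ hc.2
      have d3 := hscale u.1 v.1 (by linarith)
      set η : ℝ := (1 / 2) ^ j i
      have hη : 0 ≤ η := by positivity
      have hR : (0 : ℝ) ≤ R := Nat.cast_nonneg _
      rw [edist_dist, Prod.dist_eq, Real.dist_eq, Real.dist_eq]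
      refine ENNReal.ofReal_le_ofReal (max_le (by nlinarith) ?_)
      rw [hup, hvq, show p.1 * u.1 + p.2 - (q.1 * v.1 + q.2) =
        p.1 * (u.1 - v.1) + ((p.1 - q.1) * v.1 + (p.2 - q.2)) by ring]
      have hp1 : |p.1| ≤ 1 := by
        rw [abs_of_nonneg (hE hp).1.1]; exact (hE hp).1.2.le
      have hv1 : |v.1| ≤ R := abs_le.2 ⟨hv.1, hv.2.le⟩
      calc _ ≤ |p.1| * |u.1 - v.1| + (|p.1 - q.1| * |v.1| + |p.2 - q.2|) := by
            refine (abs_add_le _ _).trans ?_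
            rw [abs_mul]
            gcongr
            refine (abs_add_le _ _).trans ?_
            rw [abs_mul]
        _ ≤ 1 * η + (η * R + η) := by gcongr
        _ = (R + 2) * η := by ring
    rw [ENNReal.tsum_sigma']
    calc _ ≤ ∑' i : ι, ENNReal.ofReal K * ENNReal.ofReal (((1 / 2 : ℝ) ^ s) ^ j i) := by
          refine ENNReal.tsum_le_tsum fun i => ?_
          refine (ENNReal.tsum_le_tsum fun m => ENNReal.rpow_le_rpow (hdiam ⟨i, m⟩)
            (by linarith)).trans ?_
          simp only
          rw [tsum_fintype, Finset.sum_const, Finset.card_univ, Fintype.card_fin, nsmul_eq_mul,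
            ENNReal.ofReal_rpow_of_pos (by positivity), ← ENNReal.ofReal_natCast,
            ← ENNReal.ofReal_mul (by positivity), ← ENNReal.ofReal_mul (by positivity)]
          refine ENNReal.ofReal_le_ofReal ?_
          have e : ((1 / 2 : ℝ) ^ j i) ^ (1 + s) = (1 / 2) ^ j i * ((1 / 2 : ℝ) ^ s) ^ j i := by
            rw [Real.rpow_add (by positivity), Real.rpow_one, ← Real.rpow_natCast,
              ← Real.rpow_natCast, ← Real.rpow_mul (by norm_num), ← Real.rpow_mul (by norm_num),
              mul_comm s]
          rw [Real.mul_rpow (by positivity) (by positivity), e, hK]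
          push_cast
          have e2 : (2 : ℝ) ^ j i * (1 / 2) ^ j i = 1 := by rw [← mul_pow]; norm_num
          calc 2 * (R : ℝ) * 2 ^ j i * ((R + 2) ^ (1 + s) * ((1 / 2) ^ j i * ((1 / 2) ^ s) ^ j i))
              = 2 * R * (R + 2) ^ (1 + s) * ((1 / 2) ^ s) ^ j i * (2 ^ j i * (1 / 2) ^ j i) := by
                ring
            _ = 2 * R * (R + 2) ^ (1 + s) * ((1 / 2) ^ s) ^ j i := by rw [e2, mul_one]
            _ ≤ _ := by gcongr; linarith
      _ ≤ ENNReal.ofReal K * (ε / ENNReal.ofReal K) := by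
          rw [ENNReal.tsum_mul_left]
          gcongr
      _ = ε := ENNReal.mul_div_cancel hK0 hKt

/-! ### Dimension of unions of lines -/

/-- The union of the non-vertical lines `y = p.1 x + p.2` with slope and intercept `p ∈ E`. -/
def lines (E : Set (ℝ × ℝ)) : Set (ℝ × ℝ) := {v | ∃ p ∈ E, v.2 = p.1 * v.1 + p.2}

theorem dimH_lines_le_of_unit (E A : Set (ℝ × ℝ)) (hE : E ⊆ Set.Ico 0 1 ×ˢ Set.Ico 0 1)
    (hEA : ∀ p ∈ E, ∀ x : ℝ, 0 ≤ x → x < 1 → (x, p.1 * x + p.2) ∈ A) :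
    dimH (lines E) ≤ dimH A := by
  rcases E.eq_empty_or_nonempty with rfl | ⟨p, hp⟩
  · have : lines ∅ = ∅ := by ext v; simp [lines]
    rw [this, dimH_empty]
    exact zero_le
  -- `A` contains a segment, whose projection to the first axis is an interval
  have hA1 : 1 ≤ dimH A := by
    have h1 : Set.Ico (0 : ℝ) 1 ⊆ Prod.fst '' A := fun x hx => ⟨_, hEA p hp x hx.1 hx.2, rfl⟩
    have h2 : dimH (Set.Ico (0 : ℝ) 1) = 1 := by
      rw [Real.dimH_of_nonempty_interior]
      · simp
      · rw [interior_Ico]; exact ⟨1 / 2, by norm_num, by norm_num⟩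
    rw [← h2]
    exact (dimH_mono h1).trans (LipschitzWith.prod_fst.dimH_image_le A)
  rcases le_or_gt 2 (dimH A) with h2 | h2
  · refine le_trans ?_ h2
    refine (dimH_mono (Set.subset_univ _)).trans ?_
    rw [Real.dimH_univ_eq_finrank]
    simp
  refine le_of_forall_gt fun c hc => ?_
  obtain ⟨d, hd1, hd2⟩ := ENNReal.lt_iff_exists_nnreal_btwn.1 (lt_min hc h2)
  obtain ⟨σ, hσ1, hσ2⟩ := ENNReal.lt_iff_exists_nnreal_btwn.1 hd2
  have hd : (1 : ℝ) < d := by exact_mod_cast hA1.trans_lt hd1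
  have hdσ : (d : ℝ) < σ := by exact_mod_cast hσ1
  have hσ : (σ : ℝ) < 2 := by exact_mod_cast hσ2.trans_le (min_le_right _ _)
  refine lt_of_le_of_lt ?_ (hσ2.trans_le (min_le_left _ _))
  have hA : μH[(d : ℝ)] A = 0 := hausdorffMeasure_of_dimH_lt hd1
  set s : ℝ := σ - 1 with hs
  have ha : 1 ≤ 2 * (1 / 2 : ℝ) ^ s := by
    have : (1 / 2 : ℝ) ^ (1 : ℝ) ≤ (1 / 2 : ℝ) ^ s :=
      Real.rpow_le_rpow_of_exponent_ge (by norm_num) (by norm_num) (by linarith)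
    rw [Real.rpow_one] at this
    linarith
  have had : (1 / 2 : ℝ) ^ s / 2 < (1 / 2 : ℝ) ^ (d : ℝ) := by
    have h3 : (1 / 2 : ℝ) ^ s / 2 = (1 / 2 : ℝ) ^ (σ : ℝ) := by
      rw [show (σ : ℝ) = s + 1 by rw [hs]; ring, Real.rpow_add (by norm_num), Real.rpow_one]
      ring
    rw [h3]
    exact Real.rpow_lt_rpow_of_exponent_gt (by norm_num) (by norm_num) hdσ
  have hcov := exists_cell_cover E A hE hEA d (by linarith) hA _ ha had
  have hzero := hausdorffMeasure_lines_eq_zero E hE s (by linarith) hcov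
  have hsub : lines E ⊆
      ⋃ R : ℕ, {v : ℝ × ℝ | ∃ p ∈ E, v.1 ∈ Set.Ico (-R : ℝ) R ∧ v.2 = p.1 * v.1 + p.2} := by
    rintro v ⟨p, hp, hv⟩
    obtain ⟨R, hR⟩ := exists_nat_gt |v.1|
    rw [abs_lt] at hR
    exact Set.mem_iUnion.2 ⟨R, p, hp, ⟨hR.1.le, hR.2⟩, hv⟩
  refine (dimH_mono hsub).trans ?_
  rw [dimH_iUnion]
  refine iSup_le fun R => dimH_le_of_hausdorffMeasure_ne_top ?_
  have := hzero R
  rw [show 1 + s = (σ : ℝ) by rw [hs]; ring] at this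
  rw [this]
  exact ENNReal.zero_ne_top

theorem dimH_image_le_of_contDiff {V W : Type*} [NormedAddCommGroup V] [NormedSpace ℝ V]
    [FiniteDimensional ℝ V] [NormedAddCommGroup W] [NormedSpace ℝ W] {f : V → W}
    (hf : ContDiff ℝ 1 f) (s : Set V) : dimH (f '' s) ≤ dimH s :=
  hf.contDiffOn.dimH_image_le convex_univ (Set.subset_univ s)

theorem dimH_lines_le (E A : Set (ℝ × ℝ)) (x₀ x₁ : ℝ) (hx : x₀ < x₁)
    (hEA : ∀ p ∈ E, ∀ x : ℝ, x₀ ≤ x → x < x₁ → (x, p.1 * x + p.2) ∈ A) :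
    dimH (lines E) ≤ dimH A := by
  set l := x₁ - x₀ with hl
  have hl0 : 0 < l := sub_pos.2 hx
  -- after rescaling `x`, split the parameters into unit squares and move each one to `[0,1)²`
  set Ez : ℤ × ℤ → Set (ℝ × ℝ) := fun z =>
    {p | p ∈ E ∧ ⌊p.1 * l⌋ = z.1 ∧ ⌊p.1 * x₀ + p.2⌋ = z.2} with hEz
  have hsub : lines E ⊆ ⋃ z, lines (Ez z) := by
    rintro v ⟨p, hp, hv⟩
    exact Set.mem_iUnion.2 ⟨(_, _), p, ⟨hp, rfl, rfl⟩, hv⟩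
  refine (dimH_mono hsub).trans ?_
  rw [dimH_iUnion]
  refine iSup_le fun z => ?_
  set Φ : ℝ × ℝ → ℝ × ℝ := fun v =>
    ((v.1 - x₀) * l⁻¹, v.2 - z.1 * ((v.1 - x₀) * l⁻¹) - z.2) with hΦ
  set Ψ : ℝ × ℝ → ℝ × ℝ := fun v => (x₀ + l * v.1, v.2 + z.1 * v.1 + z.2) with hΨ
  have hΦd : ContDiff ℝ 1 Φ := by fun_prop
  have hΨd : ContDiff ℝ 1 Ψ := by fun_prop
  set E' : Set (ℝ × ℝ) := (fun p => (p.1 * l - z.1, p.1 * x₀ + p.2 - z.2)) '' Ez z with hE'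
  have h1 : lines (Ez z) ⊆ Ψ '' lines E' := by
    rintro v ⟨p, hp, hv⟩
    refine ⟨Φ v, ⟨_, ⟨p, hp, rfl⟩, ?_⟩, ?_⟩
    · simp only [hΦ, hv]
      field_simp
      ring
    · refine Prod.ext ?_ ?_ <;> simp only [hΦ, hΨ] <;> field_simp <;> ring
  have h2 : dimH (lines E') ≤ dimH (Φ '' A) := by
    refine dimH_lines_le_of_unit E' _ ?_ ?_
    · rintro _ ⟨p, ⟨-, hp1, hp2⟩, rfl⟩
      rw [Int.floor_eq_iff] at hp1 hp2
      refine ⟨⟨?_, ?_⟩, ?_, ?_⟩ <;> simp only <;> linarith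
    · rintro _ ⟨p, ⟨hp, hp1, hp2⟩, rfl⟩ x hx0 hx1
      refine ⟨_, hEA p hp (x₀ + l * x) (by nlinarith) (by nlinarith), ?_⟩
      refine Prod.ext ?_ ?_ <;> simp only [hΦ] <;> field_simp <;> ring
  calc dimH (lines (Ez z)) ≤ dimH (Ψ '' lines E') := dimH_mono h1
    _ ≤ dimH (lines E') := dimH_image_le_of_contDiff hΨd _
    _ ≤ dimH (Φ '' A) := h2
    _ ≤ dimH A := dimH_image_le_of_contDiff hΦd _

/-- Each segment contains the part of its line over some rational interval of abscissae, and there are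
only countably many of these. -/
theorem dimH_nonvertical_lines_le {I : Type*} (a e : I → ℝ × ℝ) (he : ∀ i, (e i).1 ≠ 0)
    (c d : I → ℝ) (hcd : ∀ i, c i < d i) (A : Set (ℝ × ℝ))
    (hA : ∀ i, ∀ t ∈ Set.Icc (c i) (d i), a i + t • e i ∈ A) :
    dimH (⋃ i, {v | ∃ t : ℝ, v = a i + t • e i}) ≤ dimH A := by
  set El : ℚ × ℚ → Set (ℝ × ℝ) := fun r => {p | r.1 < r.2 ∧
    ∀ x : ℝ, r.1 ≤ x → x < r.2 → (x, p.1 * x + p.2) ∈ A} with hEl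
  have hsub : (⋃ i, {v | ∃ t : ℝ, v = a i + t • e i}) ⊆ ⋃ r, lines (El r) := by
    rintro v hv
    obtain ⟨i, t, rfl⟩ := Set.mem_iUnion.1 hv
    have hei := he i
    obtain ⟨u, w, huw, hin⟩ : ∃ u w : ℝ, u < w ∧ ∀ x : ℝ, u ≤ x → x ≤ w →
        (x - (a i).1) / (e i).1 ∈ Set.Icc (c i) (d i) := by
      have hc := hcd i
      rcases lt_or_gt_of_ne hei with h | h
      · refine ⟨(a i).1 + d i * (e i).1, (a i).1 + c i * (e i).1, by nlinarith, fun x h1 h2 => ?_⟩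
        rw [Set.mem_Icc, le_div_iff_of_neg h, div_le_iff_of_neg h]
        constructor <;> linarith
      · refine ⟨(a i).1 + c i * (e i).1, (a i).1 + d i * (e i).1, by nlinarith, fun x h1 h2 => ?_⟩
        rw [Set.mem_Icc, le_div_iff₀ h, div_le_iff₀ h]
        constructor <;> linarith
    obtain ⟨r, hr1, hr2⟩ := exists_rat_btwn huw
    obtain ⟨r', hr1', hr2'⟩ := exists_rat_btwn hr2
    refine Set.mem_iUnion.2 ⟨(r, r'), ((e i).2 / (e i).1, (a i).2 - (e i).2 / (e i).1 * (a i).1),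
      ⟨by exact_mod_cast hr1', fun x hx1 hx2 => ?_⟩, ?_⟩
    · convert hA i _ (hin x (by simp only at hx1; linarith) (by simp only at hx2; linarith)) using 1
      refine Prod.ext ?_ ?_ <;> simp only [Prod.fst_add, Prod.snd_add, Prod.smul_fst,
        Prod.smul_snd, smul_eq_mul] <;> field_simp <;> ring
    · simp only [Prod.fst_add, Prod.snd_add, Prod.smul_fst, Prod.smul_snd, smul_eq_mul]
      field_simp
      ring
  refine (dimH_mono hsub).trans ?_
  rw [dimH_iUnion]
  refine iSup_le fun r => ?_
  by_cases hr : r.1 < r.2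
  · exact dimH_lines_le _ _ r.1 r.2 (by exact_mod_cast hr) fun p hp => hp.2
  · have : lines (El r) = ∅ := by ext v; simp [lines, hEl, hr]
    rw [this, dimH_empty]
    exact zero_le

/-- The same in `EuclideanSpace ℝ (Fin 2)`, `k` being the coordinate used as abscissa. -/
theorem dimH_lines_le_of_coord_ne_zero {I : Type*} (k l : Fin 2) (hkl : k ≠ l)
    (a e : I → EuclideanSpace ℝ (Fin 2)) (he : ∀ i, e i k ≠ 0)
    (c d : I → ℝ) (hcd : ∀ i, c i < d i) (A : Set (EuclideanSpace ℝ (Fin 2)))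
    (hA : ∀ i, ∀ t ∈ Set.Icc (c i) (d i), a i + t • e i ∈ A) :
    dimH (⋃ i, {v | ∃ t : ℝ, v = a i + t • e i}) ≤ dimH A := by
  set f : EuclideanSpace ℝ (Fin 2) → ℝ × ℝ := fun v => (v k, v l) with hf
  set g : ℝ × ℝ → EuclideanSpace ℝ (Fin 2) := fun v =>
    v.1 • EuclideanSpace.single k 1 + v.2 • EuclideanSpace.single l 1 with hg
  have hfd : ContDiff ℝ 1 f := by fun_prop
  have hgd : ContDiff ℝ 1 g := by fun_prop
  have hgf : ∀ v, g (f v) = v := by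
    intro v
    ext m
    have : m = k ∨ m = l := by omega
    rcases this with rfl | rfl <;> simp [hf, hg, hkl, hkl.symm]
  have hfa : ∀ i (t : ℝ), f (a i + t • e i) = f (a i) + t • f (e i) := fun i t => by simp [hf]
  have key := dimH_nonvertical_lines_le (fun i => f (a i)) (fun i => f (e i)) he c d hcd (f '' A)
    fun i t ht => ⟨_, hA i t ht, hfa i t⟩
  refine le_trans ?_ (key.trans (dimH_image_le_of_contDiff hfd A))
  refine le_trans (dimH_mono ?_) (dimH_image_le_of_contDiff hgd _)
  intro v hv
  obtain ⟨i, t, rfl⟩ := Set.mem_iUnion.1 hv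
  exact ⟨f (a i + t • e i), Set.mem_iUnion.2 ⟨i, t, hfa i t⟩, hgf _⟩

/-- Keleti's line segment extension theorem in the plane: if `A ⊆ ℝ²` is a
union of a family of line segments and `B` is the union of the corresponding
full lines, then `dim A = dim B`. -/
theorem keleti_line_segment_extension {I : Type*}
    (a e : I → EuclideanSpace ℝ (Fin 2)) (he : ∀ i, ‖e i‖ = 1)
    (c d : I → ℝ) (hcd : ∀ i, c i < d i) :
    dimH (⋃ i, {x | ∃ t ∈ Set.Icc (c i) (d i), x = a i + t • e i}) =
      dimH (⋃ i, {x | ∃ t : ℝ, x = a i + t • e i}) := by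
  refine le_antisymm (dimH_mono ?_) ?_
  · exact Set.iUnion_mono fun i x ⟨t, _, hx⟩ => ⟨t, hx⟩
  set A := ⋃ i, {x | ∃ t ∈ Set.Icc (c i) (d i), x = a i + t • e i} with hA
  have hmem : ∀ i, ∀ t ∈ Set.Icc (c i) (d i), a i + t • e i ∈ A := fun i t ht =>
    Set.mem_iUnion.2 ⟨i, t, ht, rfl⟩
  have hsub : (⋃ i, {x | ∃ t : ℝ, x = a i + t • e i}) ⊆
      (⋃ i : {i // e i 0 ≠ 0}, {x | ∃ t : ℝ, x = a i + t • e i}) ∪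
      (⋃ i : {i // e i 1 ≠ 0}, {x | ∃ t : ℝ, x = a i + t • e i}) := by
    intro x hx
    obtain ⟨i, hi⟩ := Set.mem_iUnion.1 hx
    by_cases h0 : e i 0 = 0
    · have h1 : e i 1 ≠ 0 := by
        intro h1
        have : e i = 0 := by ext m; fin_cases m <;> simp [h0, h1]
        have h2 := he i
        rw [this, norm_zero] at h2
        exact zero_ne_one h2
      exact Or.inr (Set.mem_iUnion.2 ⟨⟨i, h1⟩, hi⟩)
    · exact Or.inl (Set.mem_iUnion.2 ⟨⟨i, h0⟩, hi⟩)
  refine (dimH_mono hsub).trans ?_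
  rw [dimH_union]
  refine max_le ?_ ?_
  · exact dimH_lines_le_of_coord_ne_zero 0 1 (by decide) (fun i : {i // e i 0 ≠ 0} => a i)
      (fun i => e i) (fun i => i.2) (fun i => c i) (fun i => d i) (fun i => hcd i) A
      fun i => hmem i
  · exact dimH_lines_le_of_coord_ne_zero 1 0 (by decide) (fun i : {i // e i 1 ≠ 0} => a i)
      (fun i => e i) (fun i => i.2) (fun i => c i) (fun i => d i) (fun i => hcd i) A
      fun i => hmem i
end
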